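/- arXiv:nlin/0603044 — 6 statements merged into one kernel-verified Lean document; each statement's English description precedes it below -/
import Mathlib

section
/- There exists a unique sequence of polynomials (Q_n)_{n≥0} with rational coefficients such that Q_0 = 1, Q_1 = z, and for all n ≥ 1 the differential–difference recurrence Q_{n+1} Q_{n−1} = z Q_n² − 4 (Q_n Q_n'' − (Q_n')²) holds; moreover each Q_n is a monic polynomial of degree n(n+1)/2 with integer coefficients. -/
/-!
Write `T f = z f² - 4 (f f'' - f'²)`, so that `T f / f² = z - 4 (log f)''`, and let `q, r, u` be three
consecutive terms, `u q = T r`. The point is that `q` divides `T r` at every stage.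

*Divisibility.* Comparing second logarithmic derivatives gives
`T u * q² = T (u q) + z (u q)² - u² T q`, and for every `r` the polynomial
`T (T r) + z (T r)²` is a multiple of `r`: it equals `2 z F² - 4 (F F'' - F'²)` with
`F = T r`, and modulo `r` both terms reduce to `32 z r'⁴`
(`dvd_yvOp_yvOp`). Hence if `r ∣ T q` and `q, r` are coprime, then `r ∣ T u`.

*Coprimality.* Consecutive terms satisfy the Hirota equation `q r'' - 2 q' r' + q'' r = 0`. Where `q`
does not vanish this is a regular second-order linear equation for `r`, so no irreducible factor of `r`
that is prime to `q` can be repeated. A common factor of `r` and `u` divides `4 r'²`, because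
`u q = T r`; so it would be such a repeated factor (`isCoprime_next`).

*Propagation of the Hirota equation.* It is carried along together with a second bilinear equation
(`S` below), which amounts to saying that `(log (r / q))'` solves the second Painlevé equation. The pair
implies `u' q - u q' = (2n + 3) r²`, which yields both equations for `(r, u)`.

Degrees and integrality follow since `T r` is monic of degree `2 deg r + 1`, and dividing by a
monic integer polynomial preserves integer coefficients.
-/

open Polynomial

/-- The defining property of the Yablonskii–Vorob'ev polynomials:
`Q 0 = 1`, `Q 1 = z`, and for all `n ≥ 1` (here written with shifted index)
`Q (n+1) * Q (n-1) = z * Q n ^ 2 - 4 * (Q n * Q n '' - (Q n ')^2)`. -/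
def IsYablonskiiVorobev (Q : ℕ → Polynomial ℚ) : Prop :=
  Q 0 = 1 ∧ Q 1 = X ∧
    ∀ n : ℕ, Q (n + 2) * Q n =
      X * (Q (n + 1)) ^ 2 -
        4 * (Q (n + 1) * derivative (derivative (Q (n + 1))) -
              (derivative (Q (n + 1))) ^ 2)

namespace YV

/-- The right-hand side `z f² - 4 (f f'' - f'²)` of the recurrence. -/
noncomputable def yvOp {R : Type*} [CommRing R] (f : R[X]) : R[X] :=
  X * f ^ 2 - 4 * (f * derivative (derivative f) - (derivative f) ^ 2)

/-- The sequence given by exact division in the recurrence. The quotient `/ₘ` discards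
the remainder; `inv_yv` shows that there is none. -/
noncomputable def yv : ℕ → ℚ[X]
  | 0 => 1
  | 1 => X
  | n + 2 => yvOp (yv (n + 1)) /ₘ yv n

/-- The properties of consecutive terms `q = Q n`, `r = Q (n + 1)` carried along the recurrence. -/
structure Inv (n : ℕ) (q r : ℚ[X]) : Prop where
  monic_q : q.Monic
  monic_r : r.Monic
  deg_q : 2 * q.natDegree = n * (n + 1)
  deg_r : 2 * r.natDegree = (n + 1) * (n + 2)
  int_q : ∃ q₀ : ℤ[X], q₀.Monic ∧ q₀.map (Int.castRingHom ℚ) = q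
  int_r : ∃ r₀ : ℤ[X], r₀.Monic ∧ r₀.map (Int.castRingHom ℚ) = r
  coprime : IsCoprime q r
  dvd_q : q ∣ yvOp r
  dvd_r : r ∣ yvOp q
  /-- The Hirota equation `D² (r · q) = 0`. -/
  H : q * derivative (derivative r) - 2 * derivative q * derivative r
    + derivative (derivative q) * r = 0
  /-- The equation `D³ (r · q) = z D (r · q) - (n + 1) r q`, with `q'''` eliminated by means of the
  derivative of the Hirota equation. -/
  S : 2 * q * derivative (derivative (derivative r)) - 4 * derivative q * derivative (derivative r)
    + 2 * derivative (derivative q) * derivative r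
    = X * (derivative r * q - r * derivative q) - ((n : ℚ[X]) + 1) * q * r

theorem monic_yvOp {R : Type*} [CommRing R] [IsDomain R] {f : R[X]} (hf : f.Monic) :
    (yvOp f).Monic ∧ (yvOp f).natDegree = 2 * f.natDegree + 1 := by
  have hm : (X * f ^ 2).Monic := monic_X.mul (hf.pow 2)
  have hnd : (X * f ^ 2).natDegree = 2 * f.natDegree + 1 := by
    rw [monic_X.natDegree_mul (hf.pow 2), hf.natDegree_pow, natDegree_X]; ring
  have hlt : (4 * (f * derivative (derivative f) - (derivative f) ^ 2)).degree
      < (X * f ^ 2).degree := by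
    rw [degree_eq_natDegree hm.ne_zero, hnd]
    refine lt_of_le_of_lt degree_le_natDegree ?_
    have h1 := natDegree_derivative_le f
    have h2 := natDegree_derivative_le (derivative f)
    have h3 : (4 * (f * derivative (derivative f) - (derivative f) ^ 2)).natDegree
        ≤ 2 * f.natDegree := by
      have h4 : (4 : R[X]) = C 4 := (map_ofNat C 4).symm
      rw [h4]
      refine (natDegree_C_mul_le _ _).trans ((natDegree_sub_le _ _).trans (max_le ?_ ?_))
      · exact natDegree_mul_le.trans (by omega)
      · exact natDegree_pow_le.trans (by omega)
    exact_mod_cast Nat.lt_succ_of_le h3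
  refine ⟨hm.sub_of_left hlt, ?_⟩
  rw [← hnd]
  exact natDegree_eq_of_degree_eq (degree_sub_eq_left_of_degree_lt hlt)

theorem map_yvOp (f : ℤ[X]) :
    (yvOp f).map (Int.castRingHom ℚ) = yvOp (f.map (Int.castRingHom ℚ)) := by
  simp [yvOp, derivative_map]

/-- The cancellation modulo `r` behind the exactness of the division at every step. -/
theorem dvd_yvOp_yvOp (r : ℚ[X]) : r ∣ yvOp (yvOp r) + X * (yvOp r) ^ 2 := by
  -- `F = T r` and its derivatives, split into a multiple of `r` and a remainder.
  have h0 : yvOp r = r * (X * r - 4 * derivative (derivative r)) + 4 * (derivative r) ^ 2 := by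
    unfold yvOp; ring
  have d4 : derivative (4 : ℚ[X]) = 0 := derivative_ofNat 4
  set B : ℚ[X] := r + 2 * X * derivative r - 4 * derivative (derivative (derivative r)) with hB
  have h1 : derivative (yvOp r) = r * B + 4 * derivative r * derivative (derivative r) := by
    rw [hB]
    simp only [yvOp, derivative_sub, derivative_mul, derivative_X, derivative_pow, d4]
    simp [map_ofNat]
    ring
  have h2 : derivative (derivative (yvOp r)) = r * (derivative r + derivative B)
      + 2 * X * (derivative r) ^ 2 + 4 * (derivative (derivative r)) ^ 2 := by
    rw [h1]
    simp only [derivative_add, derivative_mul, d4]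
    rw [hB]
    ring
  rw [show yvOp (yvOp r) = X * (yvOp r) ^ 2 - 4 * (yvOp r * derivative (derivative (yvOp r))
    - (derivative (yvOp r)) ^ 2) from rfl, h2, h1, h0]
  generalize X * r - 4 * derivative (derivative r) = A
  generalize derivative r + derivative B = C'
  generalize derivative (derivative r) = b
  generalize derivative r = a
  exact ⟨2 * X * (r * A ^ 2 + 8 * A * a ^ 2) - 4 * (A * (r * C' + 2 * X * a ^ 2 + 4 * b ^ 2)
    + 4 * a ^ 2 * C' - (r * B ^ 2 + 8 * B * a * b)), by ring⟩

/-- A form of `(log (u q))'' = (log u)'' + (log q)''`. -/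
theorem yvOp_mul (u q : ℚ[X]) :
    yvOp u * q ^ 2 = yvOp (u * q) + X * (u * q) ^ 2 - u ^ 2 * yvOp q := by
  simp only [yvOp, derivative_mul, derivative_add]
  ring

/-- A common irreducible factor of `r` and `u` would divide `r'`, whereas the Hirota equation prevents
`r` from having a repeated factor prime to `q`. -/
theorem isCoprime_next {q r u : ℚ[X]} (hr : r ≠ 0) (hqr : IsCoprime q r) (hu : u * q = yvOp r)
    (H : q * derivative (derivative r) - 2 * derivative q * derivative r
      + derivative (derivative q) * r = 0) : IsCoprime r u := by
  refine isCoprime_of_irreducible_dvd (fun h => hr h.1) fun π hπ hπr hπu => ?_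
  have hp : Prime π := hπ.prime
  have hπq : ¬ π ∣ q := fun h => hπ.not_isUnit (hqr.isUnit_of_dvd' h hπr)
  have hπ' : ¬ π ∣ derivative π := fun h =>
    hπ.not_isUnit (IsCoprime.isUnit_of_dvd' (show IsCoprime π (derivative π) from
      hπ.separable) dvd_rfl h)
  have hr' : π ∣ derivative r := by
    have h : π ∣ 4 * (derivative r) ^ 2 := by
      have e : 4 * (derivative r) ^ 2
          = u * q - r * (X * r - 4 * derivative (derivative r)) := by
        rw [hu]; unfold yvOp; ring
      rw [e]
      exact dvd_sub (hπu.mul_right _) (hπr.mul_right _)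
    rcases hp.dvd_or_dvd h with h | h
    · refine absurd (isUnit_of_dvd_unit h ?_) hπ.not_isUnit
      rw [show (4 : ℚ[X]) = C 4 from (map_ofNat C 4).symm]
      exact isUnit_C.2 (by norm_num)
    · exact hp.dvd_of_dvd_pow h
  obtain ⟨s, e, hs⟩ := (FiniteMultiplicity.of_prime_left hp hr).exists_eq_pow_mul_and_not_dvd
  generalize multiplicity π r = m at e
  match m, e with
  | 0, e => rw [pow_zero, one_mul] at e; exact hs (e ▸ hπr)
  | 1, e =>
    rw [pow_one] at e
    rw [e, derivative_mul, dvd_add_left (dvd_mul_right _ _)] at hr'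
    exact (hp.dvd_or_dvd hr').elim hπ' hs
  | j + 2, e =>
    have e1 : derivative r = π ^ (j + 1) * (((j : ℚ[X]) + 2) * derivative π * s
        + π * derivative s) := by
      rw [e, derivative_mul, derivative_pow]
      push_cast
      simp only [map_add, map_natCast, map_ofNat]
      ring
    have e2 : derivative (derivative r) = π ^ j * (((j : ℚ[X]) + 1) * ((j : ℚ[X]) + 2)
        * (derivative π) ^ 2 * s + π * (((j : ℚ[X]) + 1) * derivative π * derivative s
        + derivative (((j : ℚ[X]) + 2) * derivative π * s + π * derivative s))) := by
      rw [e1, derivative_mul, derivative_pow]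
      generalize derivative (((j : ℚ[X]) + 2) * derivative π * s + π * derivative s) = Z
      push_cast
      simp only [map_add, map_natCast, map_one]
      ring
    generalize ((j : ℚ[X]) + 1) * derivative π * derivative s
        + derivative (((j : ℚ[X]) + 2) * derivative π * s + π * derivative s) = Z at e2
    generalize ((j : ℚ[X]) + 2) * derivative π * s + π * derivative s = Y at e1
    -- The terms of lowest order in `π` in the Hirota equation.
    have key : q * (((j : ℚ[X]) + 1) * ((j : ℚ[X]) + 2) * (derivative π) ^ 2 * s)
        = π * (2 * derivative q * Y - derivative (derivative q) * π * s - q * Z) := by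
      apply mul_left_cancel₀ (pow_ne_zero j hp.ne_zero)
      rw [e2, e1, e] at H
      linear_combination H
    have hc : ∀ k : ℕ, ¬ π ∣ ((k + 1 : ℕ) : ℚ[X]) := fun k h => by
      refine hπ.not_isUnit (isUnit_of_dvd_unit h ?_)
      rw [← C_eq_natCast]
      exact isUnit_C.2 (isUnit_iff_ne_zero.2 (by exact_mod_cast Nat.succ_ne_zero k))
    have h1 := hc j
    have h2 := hc (j + 1)
    push_cast at h1 h2
    rw [add_assoc, one_add_one_eq_two] at h2
    have := Dvd.intro _ key.symm
    rcases hp.dvd_or_dvd this with h | h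
    · exact hπq h
    rcases hp.dvd_or_dvd h with h | h
    · rcases hp.dvd_or_dvd h with h | h
      · exact (hp.dvd_or_dvd h).elim h1 h2
      · exact hπ' (hp.dvd_of_dvd_pow h)
    · exact hs h

/-- The Wronskian identity `u' q - u q' = (2n + 3) r²`. -/
theorem wronskian {n : ℕ} {q r u : ℚ[X]} (h : Inv n q r) (hu : u * q = yvOp r) :
    derivative u * q - u * derivative q = (2 * (n : ℚ[X]) + 3) * r ^ 2 := by
  have hT : derivative u * q + u * derivative q = r ^ 2 + 2 * X * r * derivative r
      - 4 * (r * derivative (derivative (derivative r))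
        - derivative r * derivative (derivative r)) := by
    rw [← derivative_mul, hu]
    have d4 : derivative (4 : ℚ[X]) = 0 := derivative_ofNat 4
    simp only [yvOp, derivative_sub, derivative_mul, derivative_X, derivative_pow, d4]
    simp [map_ofNat]
    ring
  apply mul_left_cancel₀ h.monic_q.ne_zero
  have hS := h.S
  have hH := h.H
  unfold yvOp at hu
  linear_combination q * hT - 2 * derivative q * hu - 2 * r * hS + 4 * derivative r * hH

/-- Both bilinear equations for `(r, u)` are checked after multiplication by `q`, where `q u`, `q u'`
and `q u''` can be eliminated by the recurrence, the Wronskian identity and its derivative. -/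
theorem Inv.next {n : ℕ} {q r u : ℚ[X]} (h : Inv n q r) (hu : u * q = yvOp r) :
    Inv (n + 1) r u := by
  have hq0 := h.monic_q.ne_zero
  obtain ⟨hTm, hTd⟩ := monic_yvOp h.monic_r
  have hum : u.Monic := h.monic_q.of_mul_monic_right (hu ▸ hTm)
  have hcop : IsCoprime r u := isCoprime_next h.monic_r.ne_zero h.coprime hu h.H
  have hW := wronskian h hu
  have hW' : derivative (derivative u) * q - u * derivative (derivative q)
      = 2 * (2 * (n : ℚ[X]) + 3) * r * derivative r := by
    have := congrArg derivative hW
    simp only [derivative_sub, derivative_mul, derivative_pow, derivative_add,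
      derivative_natCast, derivative_ofNat] at this
    simp [map_ofNat] at this
    linear_combination this
  have hH : r * derivative (derivative u) - 2 * derivative r * derivative u
      + derivative (derivative r) * u = 0 := by
    apply mul_left_cancel₀ hq0
    linear_combination r * hW' - 2 * derivative r * hW + u * h.H
  refine ⟨h.monic_r, hum, ?_, ?_, h.int_r, ?_, hcop, ?_, ?_, hH, ?_⟩
  · rw [h.deg_r]
  · have h1 := h.deg_q
    have h2 := h.deg_r
    have h3 : u.natDegree + q.natDegree = 2 * r.natDegree + 1 := by
      rw [← hum.natDegree_mul h.monic_q, hu, hTd]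
    nlinarith
  · obtain ⟨q₀, hq₀, rfl⟩ := h.int_q
    obtain ⟨r₀, hr₀, rfl⟩ := h.int_r
    have e : (yvOp r₀ /ₘ q₀).map (Int.castRingHom ℚ) = u := by
      rw [map_divByMonic _ hq₀, map_yvOp, ← hu, mul_comm, mul_divByMonic_cancel_left _ h.monic_q]
    refine ⟨_, ?_, e⟩
    exact monic_of_injective (RingHom.injective_int _) (e ▸ hum)
  · have h1 : r ∣ yvOp u * q ^ 2 := by
      rw [yvOp_mul, hu]
      exact dvd_sub (dvd_yvOp_yvOp r) (h.dvd_r.mul_left _)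
    exact h.coprime.symm.pow_right.dvd_of_dvd_mul_right h1
  · exact Dvd.intro _ hu
  · have hH' := congrArg derivative hH
    simp only [derivative_sub, derivative_mul, derivative_add, derivative_ofNat,
      derivative_zero] at hH'
    apply mul_left_cancel₀ hq0
    unfold yvOp at hu
    push_cast
    linear_combination -u * h.S + (2 * (n : ℚ[X]) + 3) * r * hu
      - 2 * derivative r * hW' + 4 * derivative (derivative r) * hW
      - X * r * hW + 2 * q * hH'

theorem inv_yv_zero : Inv 0 1 X := by
  refine ⟨monic_one, monic_X, by simp, by simp, ⟨1, monic_one, by simp⟩, ⟨X, monic_X, by simp⟩,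
    isCoprime_one_left, one_dvd _, by simp [yvOp], by simp, by simp⟩

theorem yv_mul {n : ℕ} (h : Inv n (yv n) (yv (n + 1))) :
    yv (n + 2) * yv n = yvOp (yv (n + 1)) := by
  obtain ⟨u, hu⟩ := h.dvd_q
  rw [yv, hu, mul_divByMonic_cancel_left _ h.monic_q, mul_comm]

theorem inv_yv (n : ℕ) : Inv n (yv n) (yv (n + 1)) := by
  induction n with
  | zero => simpa [yv] using inv_yv_zero
  | succ n ih => exact ih.next (yv_mul ih)

theorem isYV_yv : IsYablonskiiVorobev yv :=
  ⟨by rw [yv], by rw [yv], fun n => yv_mul (inv_yv n)⟩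

theorem eq_yv {Q : ℕ → ℚ[X]} (hQ : IsYablonskiiVorobev Q) : Q = yv := by
  have key : ∀ n, Q n = yv n ∧ Q (n + 1) = yv (n + 1) := by
    intro n
    induction n with
    | zero => exact ⟨by rw [hQ.1, yv], by rw [hQ.2.1, yv]⟩
    | succ n ih =>
      refine ⟨ih.2, mul_right_cancel₀ (inv_yv n).monic_q.ne_zero ?_⟩
      have := hQ.2.2 n
      rw [ih.1, ih.2] at this
      rw [this, yv_mul (inv_yv n), yvOp]
  exact funext fun n => (key n).1

end YV

/-- There exists a unique sequence of polynomials with rational coefficients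
satisfying `Q 0 = 1`, `Q 1 = z` and the Yablonskii–Vorob'ev recurrence; moreover
each `Q n` is a monic polynomial of degree `n (n + 1) / 2` with integer
coefficients. -/
theorem yablonskii_vorobev_exists_unique :
    (∃! Q : ℕ → Polynomial ℚ, IsYablonskiiVorobev Q) ∧
      ∀ Q : ℕ → Polynomial ℚ, IsYablonskiiVorobev Q →
        ∀ n : ℕ, (Q n).Monic ∧ (Q n).natDegree = n * (n + 1) / 2 ∧
          ∀ k : ℕ, ∃ m : ℤ, (Q n).coeff k = (m : ℚ) := by
  refine ⟨⟨YV.yv, YV.isYV_yv, fun Q hQ => YV.eq_yv hQ⟩, fun Q hQ n => ?_⟩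
  rw [YV.eq_yv hQ]
  have h := YV.inv_yv n
  refine ⟨h.monic_q, ?_, fun k => ?_⟩
  · have := h.deg_q
    omega
  · obtain ⟨q₀, -, e⟩ := h.int_q
    exact ⟨q₀.coeff k, by rw [← e, coeff_map]; simp⟩
end

section
/- For every integer n ≥ 2 and every integer m ≥ 1: if m is not divisible by 3 then s_{n,m} = 0, and if m = 3l with l ≥ 1 then s_{n,3l} = − Σ_{i=2}^{n} c_l(i). -/
/-!
Everything happens in the field `ℂ((t))` of Laurent series in `t = 1/z`, with the derivation
`d/dz = -t² d/dt`. The logarithmic derivative `u_n = Q_n' / Q_n` is there the generating series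
`∑ s_{n,m} t ^ (m + 1)` of the power sums (`aeval_ne_zero_and_ddz`), so the power sums of
consecutive polynomials are compared by the differences `w = u_{n-1} - u_n`.

The recurrence says that `f = Q_{n+1} Q_{n-1} / Q_n²` equals `z - 4 u_n'`; its logarithmic
derivative is `u_{n+1} + u_{n-1} - 2 u_n`. These two facts are exactly a Bäcklund transformation:
if `w = u_{n-1} - u_n` solves Painlevé II with `α = n` and `u_{n-1}' + u_n' + w² = 0`, then
`v = u_n - u_{n+1}` satisfies the same relations with `α = n + 1` (`backlund`). The induction starts
from `u_0 = 0`, `u_1 = 1/z`, and also shows `Q_n ≠ 0`, because `f` has leading term `z`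
(`painleve_logDeriv`).

A formal solution `∑ v_k t ^ (k + 1)` of Painlevé II is determined by its equation, and the
recursion for the `c_l` identifies it as `∑ c_l(α) t ^ (3 l + 1)` (`painleve_coeff`,
`coeff_unique`). Hence `s_{n-1,m} - s_{n,m}` is `c_{m/3}(n)` or `0`, and the theorem follows by
telescoping from `s_{0,m} = 0`; the term `i = 1` drops out because the only root of `Q_1` is `0`.
-/

open Polynomial

/-- The `m`-th power sum `s_{n,m}` of the complex roots (with multiplicity)
of the polynomial `Q n`. -/
noncomputable def powerSum (Q : ℕ → Polynomial ℚ) (n m : ℕ) : ℂ :=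
  (((Q n).map (algebraMap ℚ ℂ)).roots.map (· ^ m)).sum

namespace YablonskiiVorobev

/-! ### Laurent series at infinity and the derivation `d/dz` -/

/-- The field `ℂ((t))`, where `t = 1/z` is the coordinate at infinity. -/
abbrev K : Type := HahnSeries ℤ ℂ

/-- The coefficientwise `ℂ`-algebra structure. Instance search would otherwise find the one
induced from power series, whose scalar action is not definitionally the coefficientwise one. -/
noncomputable instance (priority := 10000) algebraK : Algebra ℂ K :=
  HahnSeries.instAlgebra

/-- The Euler operator `t d/dt`, acting on `t ^ k` as multiplication by `k`. -/
noncomputable def euler : K →ₗ[ℂ] K where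
  toFun f := ⟨fun k => (k : ℂ) * f.coeff k, f.isPWO_support.mono fun k hk => by
    simp only [Function.mem_support, HahnSeries.mem_support] at hk ⊢
    exact right_ne_zero_of_mul hk⟩
  map_add' f g := by ext k; simp [mul_add]
  map_smul' r f := by ext k; simp [mul_left_comm]

theorem euler_coeff (f : K) (k : ℤ) : (euler f).coeff k = (k : ℂ) * f.coeff k := rfl

theorem euler_support (f : K) : (euler f).support ⊆ f.support := by
  intro k hk
  simp only [HahnSeries.mem_support, euler_coeff] at hk ⊢
  exact right_ne_zero_of_mul hk

theorem euler_mul (f g : K) : euler (f * g) = f * euler g + g * euler f := by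
  rw [mul_comm g]
  ext k
  rw [euler_coeff, HahnSeries.coeff_add, HahnSeries.coeff_mul,
    HahnSeries.coeff_mul_left' f.isPWO_support (euler_support f),
    HahnSeries.coeff_mul_right' g.isPWO_support (euler_support g),
    ← Finset.sum_add_distrib, Finset.mul_sum]
  refine Finset.sum_congr rfl fun ij hij => ?_
  have h := (Finset.mem_antidiagonal.1 hij).2.2
  rw [euler_coeff, euler_coeff, ← h]
  push_cast
  ring

/-- The derivation `d/dz = - t² d/dt` of `ℂ((t))`. -/
noncomputable def ddz : Derivation ℂ K K :=
  Derivation.mk'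
    { toFun := fun f => -(HahnSeries.single 1 1 * euler f)
      map_add' := fun f g => by rw [map_add]; ring
      map_smul' := fun r f => by
        ext k
        simp [HahnSeries.coeff_single_mul, euler_coeff] } fun f g => by
    simp only [LinearMap.coe_mk, AddHom.coe_mk, euler_mul, smul_eq_mul]
    ring

theorem ddz_coeff (f : K) (k : ℤ) :
    (ddz f).coeff k = -(((k - 1 : ℤ) : ℂ) * f.coeff (k - 1)) := by
  simp [ddz, HahnSeries.coeff_single_mul, euler_coeff]

/-- The element `z = t⁻¹`. -/
noncomputable def z : K := HahnSeries.single (-1) 1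

theorem z_mul_coeff (f : K) (k : ℤ) : (z * f).coeff k = f.coeff (k + 1) := by
  simp [z, HahnSeries.coeff_single_mul]

theorem ddz_z : ddz z = 1 := by
  ext k
  rw [ddz_coeff, z, HahnSeries.coeff_single, HahnSeries.coeff_one]
  by_cases h : k = 0
  · simp [h]
  · rw [if_neg (by omega), if_neg h]; simp

/-- The element `∑ k, v k * t ^ (k + 1)` attached to a sequence `v`. -/
noncomputable def ser (v : ℕ → ℂ) : K :=
  HahnSeries.ofPowerSeries ℤ ℂ (PowerSeries.X * PowerSeries.mk v)

theorem ser_coeff_succ (v : ℕ → ℂ) (k : ℕ) : (ser v).coeff ((k : ℤ) + 1) = v k := by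
  have := HahnSeries.ofPowerSeries_apply_coeff (Γ := ℤ) (PowerSeries.X * PowerSeries.mk v) (k + 1)
  rw [PowerSeries.coeff_succ_X_mul, PowerSeries.coeff_mk] at this
  simpa [ser] using this

theorem ser_coeff_of_nonpos (v : ℕ → ℂ) (k : ℤ) (hk : k ≤ 0) : (ser v).coeff k = 0 := by
  rw [ser, map_mul, HahnSeries.ofPowerSeries_X, HahnSeries.coeff_single_mul,
    HahnSeries.ofPowerSeries_apply]
  rw [one_mul]
  apply HahnSeries.embDomain_of_notMem_range
  rintro ⟨j, hj⟩
  simp at hj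
  omega

theorem ser_add (v v' : ℕ → ℂ) : ser (fun k => v k + v' k) = ser v + ser v' := by
  rw [ser, ser, ser, ← map_add, ← mul_add]
  congr

theorem ser_sub (v v' : ℕ → ℂ) : ser (fun k => v k - v' k) = ser v - ser v' := by
  rw [ser, ser, ser, ← map_sub, ← mul_sub]
  congr

/-- The power series at infinity of `1 / (z - a)` is geometric. -/
theorem sub_mul_ser (a : ℂ) : (z - algebraMap ℂ K a) * ser (fun k => a ^ k) = 1 := by
  have h : algebraMap ℂ K a = HahnSeries.C a := by
    rw [HahnSeries.algebraMap_apply, Algebra.algebraMap_self_apply]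
  ext k
  rw [sub_mul, HahnSeries.coeff_sub, z_mul_coeff, h, HahnSeries.C_mul_eq_smul,
    HahnSeries.coeff_smul, HahnSeries.coeff_one]
  rcases lt_trichotomy k 0 with hk | rfl | hk
  · rw [ser_coeff_of_nonpos _ _ (by omega), ser_coeff_of_nonpos _ _ (by omega), if_neg hk.ne]
    simp
  · have := ser_coeff_succ (fun k => a ^ k) 0
    rw [ser_coeff_of_nonpos _ _ le_rfl]
    simpa using this
  · obtain ⟨j, rfl⟩ : ∃ j : ℕ, k = (j : ℤ) + 1 := ⟨(k - 1).toNat, by omega⟩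
    have := ser_coeff_succ (fun k => a ^ k) (j + 1)
    push_cast at this
    rw [ser_coeff_succ, this, if_neg hk.ne']
    simp [pow_succ, mul_comm]

/-! ### Logarithmic derivatives and power sums -/

/-- The power sums of a multiset of complex numbers, as a sequence. -/
noncomputable def psum (s : Multiset ℂ) (k : ℕ) : ℂ := (s.map (· ^ k)).sum

/-- The expansion at infinity of the logarithmic derivative of `∏ (z - a)` is the generating
series of the power sums of the roots `a`. -/
theorem prod_sub (s : Multiset ℂ) :
    (s.map fun a => z - algebraMap ℂ K a).prod ≠ 0 ∧
      ddz (s.map fun a => z - algebraMap ℂ K a).prod =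
        ser (psum s) * (s.map fun a => z - algebraMap ℂ K a).prod := by
  induction s using Multiset.induction_on with
  | empty =>
    have : ser (psum 0) = 0 := by
      have h : PowerSeries.mk (psum 0) = 0 := by ext; simp [psum]
      rw [ser, h, mul_zero, map_zero]
    simp [this]
  | cons a s ih =>
    obtain ⟨h1, h2⟩ := ih
    have ha := sub_mul_ser a
    have hs : ser (psum (a ::ₘ s)) = ser (fun k => a ^ k) + ser (psum s) := by
      rw [← ser_add]
      congr 1
      funext k
      simp [psum]
    refine ⟨by
      rw [Multiset.map_cons, Multiset.prod_cons]
      exact mul_ne_zero (left_ne_zero_of_mul_eq_one ha) h1, ?_⟩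
    rw [Multiset.map_cons, Multiset.prod_cons, Derivation.leibniz, h2, map_sub,
      Derivation.map_algebraMap, ddz_z, hs, smul_eq_mul, smul_eq_mul]
    linear_combination (-(s.map fun a => z - algebraMap ℂ K a).prod) * ha

/-- For `P ≠ 0`, the expansion at infinity of `P' / P` is the generating series of the power
sums of the roots of `P`. -/
theorem aeval_ne_zero_and_ddz (P : ℂ[X]) (hP : P ≠ 0) :
    aeval z P ≠ 0 ∧ ddz (aeval z P) = ser (psum P.roots) * aeval z P := by
  have h := (IsAlgClosed.splits P).eq_prod_roots
  have h' : aeval z P = algebraMap ℂ K P.leadingCoeff *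
      (P.roots.map fun a => z - algebraMap ℂ K a).prod := by
    conv_lhs => rw [h]
    rw [map_mul, aeval_C, map_multiset_prod, Multiset.map_map]
    simp
  obtain ⟨h1, h2⟩ := prod_sub P.roots
  rw [h']
  refine ⟨mul_ne_zero ?_ h1, ?_⟩
  · exact (_root_.map_ne_zero _).2 (leadingCoeff_ne_zero.2 hP)
  · rw [Derivation.leibniz, h2, Derivation.map_algebraMap, smul_eq_mul, smul_zero]
    ring

/-! ### Bäcklund transformations of Painlevé II -/

/-- One Bäcklund step. Here `u₀, u₁, u₂` play the role of the logarithmic derivatives of three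
consecutive polynomials and `f` that of `Q₂ Q₀ / Q₁²`. If `w = u₀ - u₁` solves Painlevé II with
parameter `n` and `u₀' + u₁' + w² = 0`, then `v = u₁ - u₂` satisfies the same two equations with
parameter `n + 1`. -/
theorem backlund {F : Type*} [Field F] [Algebra ℂ F] (D : Derivation ℂ F F) (n : ℕ)
    (x u₀ u₁ u₂ f : F) (hx : D x = 1) (hf : f = x - 4 * D u₁) (hf0 : f ≠ 0)
    (hDf : D f = (u₀ + u₂ - 2 * u₁) * f)
    (hA : D u₀ + D u₁ + (u₀ - u₁) ^ 2 = 0)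
    (hB : D (D (u₀ - u₁)) = 2 * (u₀ - u₁) ^ 3 + x * (u₀ - u₁) + n) :
    D u₁ + D u₂ + (u₁ - u₂) ^ 2 = 0 ∧
      D (D (u₁ - u₂)) = 2 * (u₁ - u₂) ^ 3 + x * (u₁ - u₂) + (n + 1 : ℕ) := by
  have : CharZero F := charZero_of_injective_algebraMap (algebraMap ℂ F).injective
  obtain ⟨w, hw⟩ : ∃ w, w = u₀ - u₁ := ⟨_, rfl⟩
  obtain ⟨v, hv⟩ : ∃ v, v = u₁ - u₂ := ⟨_, rfl⟩
  have hDw : D w = D u₀ - D u₁ := by rw [hw, map_sub]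
  have hDv : D v = D u₁ - D u₂ := by rw [hv, map_sub]
  rw [← hw] at hA hB
  rw [← hv]
  have hDf' : D f = (w - v) * f := by rw [hDf, hw, hv]; ring
  have h2 : ∀ a : F, D (2 * a) = 2 * D a := fun a => by
    rw [two_mul, map_add, two_mul]
  have hsq : ∀ a : F, D (a ^ 2) = 2 * a * D a := fun a => by
    rw [sq, Derivation.leibniz, smul_eq_mul]; ring
  have hfw : f = x + 2 * w ^ 2 + 2 * D w := by
    rw [hf, hDw]; linear_combination (-2) * hA
  have hDfw : D f = 1 + 4 * w * D w + 2 * D (D w) := by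
    rw [hfw, map_add, map_add, h2, h2, hsq, hx]; ring
  have hprod : (w + v) * f = -(2 * n + 1 : F) := by
    linear_combination hDf' - hDfw - 2 * hB + 2 * w * hfw
  -- Differentiating `(w + v) f = -(2n + 1)` and cancelling `f`.
  have hric : D w + D v + w ^ 2 - v ^ 2 = 0 := by
    have h := congrArg D hprod
    have hn : D (-(2 * n + 1 : F)) = 0 := by
      rw [map_neg, map_add, h2, D.map_natCast, D.map_one_eq_zero]; simp
    rw [hn, Derivation.leibniz, map_add, smul_eq_mul, smul_eq_mul, hDf'] at h
    refine (mul_eq_zero.1 (?_ : _ * f = 0)).resolve_right hf0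
    linear_combination h
  have hfv : f = x + 2 * v ^ 2 - 2 * D v := by
    linear_combination hfw + 2 * hric
  have hDfv : D f = 1 + 4 * v * D v - 2 * D (D v) := by
    conv_lhs => rw [hfv]
    rw [map_sub, map_add, h2, h2, hsq, hx]; ring
  constructor
  · linear_combination hA + hDw + hDv - hric
  · push_cast
    refine mul_left_cancel₀ (two_ne_zero : (2 : F) ≠ 0) ?_
    linear_combination hDfv - hDf' - hprod + 2 * v * hfv

/-- The element `z - 4 u'` does not vanish when `u = O(1/z)`, since its leading term is `z`. -/
theorem z_sub_ne_zero (v : ℕ → ℂ) : z - 4 * ddz (ser v) ≠ 0 := by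
  intro h
  have h4 : (4 : K) = HahnSeries.C 4 := (map_ofNat _ 4).symm
  have := congrArg (fun g : K => g.coeff (-1)) h
  simp only [HahnSeries.coeff_sub, h4, HahnSeries.C_mul_eq_smul, HahnSeries.coeff_smul, ddz_coeff,
    HahnSeries.coeff_zero] at this
  rw [ser_coeff_of_nonpos _ _ (by norm_num)] at this
  simp [z] at this

/-! ### Coefficients of the formal solution of Painlevé II -/

/-- A solution `∑ v k * t ^ (k + 1)` of Painlevé II has coefficients satisfying the
expected recursion. -/
theorem painleve_coeff (v : ℕ → ℂ) (n : ℕ)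
    (h : ddz (ddz (ser v)) = 2 * ser v ^ 3 + z * ser v + n) :
    v 0 = -n ∧ v 1 = 0 ∧ v 2 = 0 ∧ ∀ m : ℕ, v (m + 3) =
      (m + 1) * (m + 2) * v m - 2 * PowerSeries.coeff m (PowerSeries.mk v ^ 3) := by
  have hn : (n : K) = HahnSeries.C (n : ℂ) := (map_natCast _ n).symm
  have h2 : (2 : K) = HahnSeries.C 2 := (map_ofNat _ 2).symm
  have hcube : ser v ^ 3 = HahnSeries.single 3 1 *
      HahnSeries.ofPowerSeries ℤ ℂ (PowerSeries.mk v ^ 3) := by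
    rw [ser, ← map_pow, mul_pow, map_mul, HahnSeries.ofPowerSeries_X_pow]; rfl
  have hcube_neg : ∀ k : ℤ, k < 3 → (ser v ^ 3).coeff k = 0 := by
    intro k hk
    rw [hcube, HahnSeries.coeff_single_mul, HahnSeries.ofPowerSeries_apply, one_mul]
    apply HahnSeries.embDomain_of_notMem_range
    rintro ⟨j, hj⟩
    simp at hj
    omega
  have key : ∀ k : ℤ, (k - 1 : ℂ) * ((k - 1 - 1) * (ser v).coeff (k - 1 - 1)) =
      2 * (ser v ^ 3).coeff k + (ser v).coeff (k + 1) + if k = 0 then (n : ℂ) else 0 := by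
    intro k
    have := congrArg (fun g : K => g.coeff k) h
    simp only [HahnSeries.coeff_add, h2, hn, HahnSeries.C_mul_eq_smul, HahnSeries.coeff_smul,
      ddz_coeff, z_mul_coeff, smul_eq_mul] at this
    rw [HahnSeries.C_apply, HahnSeries.coeff_single] at this
    push_cast at this
    split_ifs at this ⊢ <;> linear_combination this
  have hs := ser_coeff_succ v
  refine ⟨?_, ?_, ?_, fun m => ?_⟩
  · have := key 0
    rw [hcube_neg _ (by norm_num), ser_coeff_of_nonpos _ (0 - 1 - 1) (by norm_num)] at this
    have h0 := hs 0
    norm_num at this h0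
    rw [h0] at this
    linear_combination -this
  · have := key 1
    rw [hcube_neg _ (by norm_num)] at this
    have h0 := hs 1
    norm_num at this h0
    rw [← h0, this]
  · have := key 2
    rw [hcube_neg _ (by norm_num)] at this
    have h0 := hs 2
    norm_num at this h0
    rw [← h0, this]
  · have := key (m + 3)
    have h0 := hs m
    have h3 := hs (m + 3)
    rw [hcube, HahnSeries.coeff_single_mul, one_mul, if_neg (by omega),
      show ((m : ℤ) + 3 - 3) = (m : ℤ) by ring, HahnSeries.ofPowerSeries_apply_coeff,
      show ((m : ℤ) + 3 - 1 - 1) = (m : ℤ) + 1 by ring, h0] at this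
    push_cast at this h3
    rw [h3] at this
    linear_combination -this

/-- Coefficients up to order `m` determine those of the cube up to order `m`. -/
theorem coeff_cube_congr (A B : PowerSeries ℂ) (m : ℕ)
    (h : ∀ j ≤ m, PowerSeries.coeff j A = PowerSeries.coeff j B) :
    PowerSeries.coeff m (A ^ 3) = PowerSeries.coeff m (B ^ 3) := by
  have mul : ∀ A B A' B' : PowerSeries ℂ,
      (∀ j ≤ m, PowerSeries.coeff j A = PowerSeries.coeff j B) →
      (∀ j ≤ m, PowerSeries.coeff j A' = PowerSeries.coeff j B') →
      ∀ j ≤ m, PowerSeries.coeff j (A * A') = PowerSeries.coeff j (B * B') := by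
    intro A B A' B' h h' j hj
    rw [PowerSeries.coeff_mul, PowerSeries.coeff_mul]
    refine Finset.sum_congr rfl fun p hp => ?_
    have := Finset.HasAntidiagonal.mem_antidiagonal.1 hp
    rw [h _ (by omega), h' _ (by omega)]
  rw [pow_three, pow_three]
  exact mul _ _ _ _ h (mul _ _ _ _ h h) m le_rfl

theorem coeff_cube (c : ℕ → ℂ) (l : ℕ) :
    PowerSeries.coeff l (PowerSeries.mk c ^ 3) =
      ∑ m ∈ Finset.range (l + 1), ∑ k ∈ Finset.range (m + 1), c k * c (m - k) * c (l - m) := by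
  rw [pow_succ, sq, PowerSeries.coeff_mul,
    Finset.Nat.sum_antidiagonal_eq_sum_range_succ_mk]
  refine Finset.sum_congr rfl fun m _ => ?_
  rw [PowerSeries.coeff_mul, Finset.Nat.sum_antidiagonal_eq_sum_range_succ_mk, Finset.sum_mul]
  simp

/-- The recursion of `painleve_coeff` determines `v`: the series `∑ v k * t ^ (k + 1)` is
`∑ c l * t ^ (3 l + 1)`, where `c` obeys the recursion of the theorem at a fixed `α`. Since
`∑ c l * t ^ (3 l)` is the image of `∑ c l * t ^ l` under `t ↦ t ^ 3`, so is its cube. -/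
theorem coeff_unique (v c : ℕ → ℂ) (h0 : v 0 = c 0) (h1 : v 1 = 0) (h2 : v 2 = 0)
    (h : ∀ m : ℕ, v (m + 3) =
      (m + 1) * (m + 2) * v m - 2 * PowerSeries.coeff m (PowerSeries.mk v ^ 3))
    (hc : ∀ l : ℕ, c (l + 1) = (3 * l + 2) * (3 * l + 1) * c l -
      2 * PowerSeries.coeff l (PowerSeries.mk c ^ 3)) (m : ℕ) :
    v m = if 3 ∣ m then c (m / 3) else 0 := by
  have hE : ∀ j, PowerSeries.coeff j (PowerSeries.expand 3 three_ne_zero (PowerSeries.mk c)) =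
      if 3 ∣ j then c (j / 3) else 0 := fun j => by
    simp [PowerSeries.coeff_expand]
  induction m using Nat.strong_induction_on with
  | _ m ih =>
    match m, ih with
    | 0, _ => simpa using h0
    | 1, _ => simpa using h1
    | 2, _ => simpa using h2
    | m + 3, ih =>
      have e := coeff_cube_congr (PowerSeries.mk v)
        (PowerSeries.expand 3 three_ne_zero (PowerSeries.mk c)) m fun j hj => by
          rw [hE, PowerSeries.coeff_mk, ih j (by omega)]
      rw [h, e, ih m (by omega), ← map_pow, PowerSeries.coeff_expand]
      by_cases hd : 3 ∣ m
      · obtain ⟨l, rfl⟩ := hd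
        have e1 : 3 * l / 3 = l := by omega
        have e2 : (3 * l + 3) / 3 = l + 1 := by omega
        rw [if_pos (by omega), if_pos (by omega), if_pos (by omega), e1, e2, hc]
        push_cast
        ring
      · rw [if_neg hd, if_neg hd, if_neg (by omega)]
        simp

/-! ### The Yablonskii–Vorob'ev polynomials -/

/-- For polynomials obeying the Yablonskii–Vorob'ev recurrence, `d/dz log (Q n / Q (n + 1))`
solves Painlevé II with parameter `n + 1`. Nonvanishing of the `Q n` and the companion first-order
relation are carried along the induction. -/
theorem painleve_logDeriv (Q : ℕ → ℂ[X]) (hQ0 : Q 0 = 1) (hQ1 : Q 1 = X)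
    (hQrec : ∀ n : ℕ, Q (n + 2) * Q n = X * (Q (n + 1)) ^ 2 -
      4 * (Q (n + 1) * derivative (derivative (Q (n + 1))) - (derivative (Q (n + 1))) ^ 2))
    (u : ℕ → K) (hu : ∀ n, u n = ser (psum (Q n).roots)) (n : ℕ) :
    Q n ≠ 0 ∧ Q (n + 1) ≠ 0 ∧
      ddz (u n) + ddz (u (n + 1)) + (u n - u (n + 1)) ^ 2 = 0 ∧
      ddz (ddz (u n - u (n + 1))) =
        2 * (u n - u (n + 1)) ^ 3 + z * (u n - u (n + 1)) + (n + 1 : ℕ) := by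
  induction n with
  | zero =>
    have h0 : u 0 = 0 := by
      have h := (aeval_ne_zero_and_ddz (Q 0) (by rw [hQ0]; exact one_ne_zero)).2
      rw [← hu, hQ0] at h
      simpa using h.symm
    have h1 : 1 = u 1 * z := by
      have h := (aeval_ne_zero_and_ddz (Q 1) (by rw [hQ1]; exact X_ne_zero)).2
      rw [← hu, hQ1, aeval_X, ddz_z] at h
      exact h
    have hz : z ≠ 0 := right_ne_zero_of_mul (h1 ▸ one_ne_zero)
    have hd : ddz (u 1) = -u 1 ^ 2 := by
      have h := congrArg ddz h1
      rw [Derivation.map_one_eq_zero, Derivation.leibniz, ddz_z, smul_eq_mul, smul_eq_mul] at h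
      refine mul_left_cancel₀ hz ?_
      linear_combination -h - u 1 * h1
    refine ⟨by rw [hQ0]; exact one_ne_zero, by rw [hQ1]; exact X_ne_zero, ?_, ?_⟩
    · rw [zero_add, h0, hd, map_zero]; ring
    · rw [zero_add, h0, zero_sub, map_neg, hd, neg_neg, sq, Derivation.leibniz, hd, smul_eq_mul]
      push_cast
      linear_combination -h1
  | succ n ih =>
    obtain ⟨hn, hn1, hA, hB⟩ := ih
    obtain ⟨q0, d0⟩ := aeval_ne_zero_and_ddz (Q n) hn
    obtain ⟨q1, d1⟩ := aeval_ne_zero_and_ddz (Q (n + 1)) hn1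
    rw [← hu] at d0 d1
    have hder : ∀ P : ℂ[X], aeval z (derivative P) = ddz (aeval z P) := fun P => by
      rw [Derivation.map_aeval, ddz_z, smul_eq_mul, mul_one]
    obtain ⟨f, hf⟩ : ∃ f, f = z - 4 * ddz (u (n + 1)) := ⟨_, rfl⟩
    have hf0 : f ≠ 0 := by rw [hf, hu]; exact z_sub_ne_zero _
    have hprod : aeval z (Q (n + 2)) * aeval z (Q n) = f * aeval z (Q (n + 1)) ^ 2 := by
      have h := congrArg (aeval z) (hQrec n)
      have h4 : aeval z (4 : ℂ[X]) = 4 := map_ofNat _ 4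
      rw [map_mul, map_sub, map_mul, map_mul, map_sub, map_mul, map_pow, map_pow, aeval_X, h4,
        hder, hder, d1, Derivation.leibniz, d1, smul_eq_mul, smul_eq_mul] at h
      rw [h, hf]
      ring
    have hn2 : Q (n + 2) ≠ 0 := by
      intro h
      rw [h, map_zero, zero_mul] at hprod
      exact mul_ne_zero hf0 (pow_ne_zero 2 q1) hprod.symm
    obtain ⟨q2, d2⟩ := aeval_ne_zero_and_ddz (Q (n + 2)) hn2
    rw [← hu] at d2
    -- The logarithmic derivative of `hprod`.
    have hDf : ddz f = (u n + u (n + 2) - 2 * u (n + 1)) * f := by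
      have h := congrArg ddz hprod
      rw [Derivation.leibniz, Derivation.leibniz, sq, Derivation.leibniz, d0, d1, d2] at h
      simp only [smul_eq_mul] at h
      refine mul_right_cancel₀ (pow_ne_zero 2 q1) ?_
      linear_combination -h + (u n + u (n + 2)) * hprod
    exact ⟨hn1, hn2, backlund ddz (n + 1) z (u n) (u (n + 1)) (u (n + 2)) f ddz_z hf hf0 hDf hA hB⟩

end YablonskiiVorobev

/-- For the Yablonskii–Vorob'ev polynomials `Q` and the Painlevé-II expansion
coefficients `c`, for every `n ≥ 2` and `m ≥ 1`: if `3 ∤ m` then `s_{n,m} = 0`,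
and if `m = 3 l` with `l ≥ 1` then `s_{n,3l} = - ∑_{i=2}^n c_l(i)`. -/
theorem powerSum_eq_neg_sum_coeffs
    (Q : ℕ → Polynomial ℚ)
    (hQ0 : Q 0 = 1) (hQ1 : Q 1 = X)
    (hQrec : ∀ n : ℕ, Q (n + 2) * Q n =
      X * (Q (n + 1)) ^ 2 -
        4 * (Q (n + 1) * derivative (derivative (Q (n + 1))) -
              (derivative (Q (n + 1))) ^ 2))
    (c : ℕ → Polynomial ℚ)
    (hc0 : c 0 = -X)
    (hcrec : ∀ l : ℕ, c (l + 1) =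
      (C (((3 * l + 2) * (3 * l + 1) : ℕ) : ℚ)) * c l -
        2 * ∑ m ∈ Finset.range (l + 1), ∑ k ∈ Finset.range (m + 1),
              c k * c (m - k) * c (l - m)) :
    ∀ n : ℕ, 2 ≤ n → ∀ m : ℕ, 1 ≤ m →
      (¬ (3 ∣ m) → powerSum Q n m = 0) ∧
      (∀ l : ℕ, 1 ≤ l → m = 3 * l →
        powerSum Q n m = - ∑ i ∈ Finset.Icc 2 n, (((c l).eval (i : ℚ) : ℚ) : ℂ)) := by
  open YablonskiiVorobev in
  have hstep : ∀ n m : ℕ, powerSum Q n m - powerSum Q (n + 1) m =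
      if 3 ∣ m then (((c (m / 3)).eval ((n + 1 : ℕ) : ℚ) : ℚ) : ℂ) else 0 := by
    intro n m
    let P : ℕ → ℂ[X] := fun n => (Q n).map (algebraMap ℚ ℂ)
    have hPrec : ∀ n : ℕ, P (n + 2) * P n = X * (P (n + 1)) ^ 2 -
        4 * (P (n + 1) * derivative (derivative (P (n + 1))) -
          (derivative (P (n + 1))) ^ 2) := fun n => by
      have h := congrArg (Polynomial.map (algebraMap ℚ ℂ)) (hQrec n)
      simpa [P, derivative_map] using h
    have hPII := (painleve_logDeriv P (by simp [P, hQ0]) (by simp [P, hQ1]) hPrec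
      (fun n => ser (psum (P n).roots)) (fun _ => rfl) n).2.2.2
    rw [← ser_sub] at hPII
    obtain ⟨h0, h1, h2, h3⟩ := painleve_coeff _ _ hPII
    refine coeff_unique (fun k => psum (P n).roots k - psum (P (n + 1)).roots k)
      (fun l => (((c l).eval ((n + 1 : ℕ) : ℚ) : ℚ) : ℂ)) ?_ h1 h2 h3 (fun l => ?_) m
    · rw [h0, hc0]; simp
    · rw [coeff_cube, hcrec]
      simp [eval_finsetSum]
  -- The constant `Q 0` has no roots, so the differences telescope to `powerSum Q n m`.
  have hsum : ∀ n m : ℕ, powerSum Q n m = -∑ i ∈ Finset.range n,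
      if 3 ∣ m then (((c (m / 3)).eval ((i + 1 : ℕ) : ℚ) : ℚ) : ℂ) else 0 := by
    intro n m
    induction n with
    | zero => simp [powerSum, hQ0]
    | succ n ih => rw [Finset.sum_range_succ, ← hstep]; linear_combination ih
  intro n hn m hm
  refine ⟨fun h => by simp [hsum, h], ?_⟩
  rintro l hl rfl
  -- The summand `i = 1` vanishes because `Q 1 = X` has `0` as its only root.
  have hone : (((c l).eval ((0 + 1 : ℕ) : ℚ) : ℚ) : ℂ) = 0 := by
    have h := hstep 0 (3 * l)
    rw [if_pos (Dvd.intro l rfl), Nat.mul_div_cancel_left l three_pos] at h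
    rw [← h]
    simp [powerSum, hQ0, hQ1]
    omega
  obtain ⟨k, rfl⟩ : ∃ k, n = k + 1 := ⟨n - 1, by omega⟩
  have hterm : ∀ i : ℕ, (if 3 ∣ 3 * l then
      (((c (3 * l / 3)).eval ((i + 1 : ℕ) : ℚ) : ℚ) : ℂ) else 0) =
        (((c l).eval ((i + 1 : ℕ) : ℚ) : ℚ) : ℂ) := fun i => by
    rw [if_pos (Dvd.intro l rfl), Nat.mul_div_cancel_left l three_pos]
  rw [hsum, Finset.sum_congr rfl fun i _ => hterm i, Finset.sum_range_succ', hone, add_zero,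
    ← Finset.Ico_succ_right_eq_Icc, Finset.sum_Ico_eq_sum_range]
  refine congrArg Neg.neg (Finset.sum_congr (by simp) fun i _ => ?_)
  rw [show i + 1 + 1 = 2 + i by ring]
end

section
/- For every integer n ≥ 2 and every integer m ≥ 1: if m is not divisible by 3 then s_{n,m} = s_{n−1,m}, and if m = 3l with l ≥ 1 then s_{n,3l} − s_{n−1,3l} = − c_l(n). -/
/-!
Let `h_n = Q_n'/Q_n` and `w = h_{n-1} - h_n`. Expanding `1 / (z - a)` at infinity gives
`h_n = ∑ s_{n,m} z^{-m-1}`, so the coefficients of `w` are `s_{n-1,m} - s_{n,m}`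
(`logDeriv_prod_linear`). The function `w` solves the second Painlevé equation with parameter `n`
(`painleve_of_toda`), which determines its expansion at infinity: matching coefficients is a
recursion with step three (`coeff_ext_of_recurrence`), and the recursion for the `c_l` says that
`∑ c_l(n) z^{-3l-1}` satisfies it (`expand_recurrence`).

That `w` solves the Painlevé equation is proved by induction on `n`, together with the bilinear
relation `w² + h_n' + h_{n-1}' = 0`. Given this relation, the recurrence reads
`f = Q_{n+1} Q_{n-1} / Q_n² = z - 4 h_n' = z + 2w² + 2w'`, while `f'/f = h_{n+1} - 2 h_n + h_{n-1}`
is the difference of two consecutive `w`s. The Painlevé equation turns this into the classical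
Bäcklund transformation, and `backlund_step` carries both facts from `n` to `n + 1`.

Everything is done formally, in the fraction field of `ℂ⟦t⟧` with `t = 1 / z`, where `d/dz` is the
extension of the derivation `-t² d/dt`.
-/

open Polynomial

namespace YablonskiiVorobev

/-! ### Derivations of fraction fields -/

/-- A derivation of a domain extends to its fraction field. It is encoded as a ring homomorphism
`a ↦ a + ε d a` into the dual numbers over the fraction field; nonzero elements go to units, so the
homomorphism extends, and the `ε`-part of the extension is the required derivation. -/
theorem exists_derivation_fractionField {R A K : Type*} [CommSemiring R] [CommRing A]
    [IsDomain A] [Algebra R A] [Field K]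
    [Algebra A K] [IsFractionRing A K] (d : Derivation R A A) :
    ∃ D : Derivation ℤ K K, ∀ a, D (algebraMap A K a) = algebraMap A K (d a) := by
  let f₀ : A → TrivSqZeroExt K K := fun a =>
    TrivSqZeroExt.inl (algebraMap A K a) + TrivSqZeroExt.inr (algebraMap A K (d a))
  have hfst₀ : ∀ a, (f₀ a).fst = algebraMap A K a := fun a => by
    simp only [f₀, TrivSqZeroExt.fst_add, TrivSqZeroExt.fst_inl, TrivSqZeroExt.fst_inr, add_zero]
  have hsnd₀ : ∀ a, (f₀ a).snd = algebraMap A K (d a) := fun a => by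
    simp only [f₀, TrivSqZeroExt.snd_add, TrivSqZeroExt.snd_inl, TrivSqZeroExt.snd_inr, zero_add]
  clear_value f₀
  let f : A →+* TrivSqZeroExt K K :=
    { toFun := f₀
      map_one' := TrivSqZeroExt.ext (by simp [hfst₀]) (by simp [hsnd₀])
      map_zero' := TrivSqZeroExt.ext (by simp [hfst₀]) (by simp [hsnd₀])
      map_add' := fun a b => TrivSqZeroExt.ext (by simp [hfst₀]) (by simp [hsnd₀])
      map_mul' := fun a b => TrivSqZeroExt.ext (by simp [hfst₀])
        (by simp [hfst₀, hsnd₀, mul_comm]) }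
  have hff : ∀ a, f a = f₀ a := fun _ => rfl
  clear_value f
  have hf : ∀ y : nonZeroDivisors A, IsUnit (f y) := fun y => by
    rw [TrivSqZeroExt.isUnit_iff_isUnit_fst]
    simp [hff, hfst₀]
  let g : K →+* TrivSqZeroExt K K := IsLocalization.lift hf
  have hgf : ∀ a, g (algebraMap A K a) = f a := fun a => IsLocalization.lift_eq hf a
  have hfst : ∀ x, (g x).fst = x := by
    have : ((TrivSqZeroExt.fstHom K K K).toRingHom.comp g) = RingHom.id K := by
      apply IsLocalization.ringHom_ext (nonZeroDivisors A)
      ext a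
      simp [hgf, hff, hfst₀]
    exact fun x => congrArg (fun φ : K →+* K => φ x) this
  let D₀ : K →+ K :=
    { toFun := fun x => (g x).snd
      map_zero' := by simp
      map_add' := fun x y => by simp }
  refine ⟨Derivation.mk' D₀.toIntLinearMap fun x y => ?_, fun a => ?_⟩
  · simp [D₀, hfst, mul_comm]
  · change (g (algebraMap A K a)).snd = _
    rw [hgf, hff, hsnd₀]

/-! ### The second Painlevé equation -/

section
variable {K : Type*} [Field K]
variable (D : Derivation ℤ K K)

theorem toda_logDeriv {a b c : K} (ha : a ≠ 0) (hb : b ≠ 0) (hc : c ≠ 0) :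
    D (c * a / b ^ 2) = c * a / b ^ 2 * (D c / c - 2 * (D b / b) + D a / a) := by
  rw [Derivation.leibniz_div, Derivation.leibniz, Derivation.leibniz_pow]
  simp only [smul_eq_mul, nsmul_eq_mul]
  field_simp
  push_cast
  ring

/-- The Bäcklund transformation `v = -w - k / f`, with `f = z + 2w² + 2w'`, takes a solution `w` of
the second Painlevé equation with parameter `(k - 1) / 2` to a solution with parameter
`(k + 1) / 2`. The relation between `w` and `v` is given here as `f' / f = w - v`. -/
theorem backlund_step [CharZero K] {z w v f k : K} (hz : D z = 1) (hf0 : f ≠ 0)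
    (hf : f = z + 2 * w ^ 2 + 2 * D w) (hDf : D f = f * (w - v))
    (hP : 2 * D (D w) = 4 * w ^ 3 + 2 * z * w + (k - 1)) (hk : D k = 0) :
    f = z + 2 * v ^ 2 - 2 * D v ∧
      2 * D (D v) = 4 * v ^ 3 + 2 * z * v + (k + 1) := by
  have D2 : D (2 : K) = 0 := by exact_mod_cast D.map_natCast 2
  -- `f` satisfies two Riccati-type equations; `e2` is the formula `v = -w - k / f`, cleared.
  have e1 : D f = 2 * w * f + k := by
    have := congrArg D hf
    simp only [map_add, Derivation.leibniz, Derivation.leibniz_pow, smul_eq_mul, hz, D2,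
      nsmul_eq_mul] at this
    push_cast at this
    rw [this, hf]
    linear_combination hP
  have e2 : f * v = - w * f - k := by linear_combination hDf - e1
  have e3 : f * D v + v * D f = -(w * D f + f * D w) := by
    have := congrArg D e2
    simpa [Derivation.leibniz, hk, sub_eq_add_neg, add_comm] using this
  have e4 : v ^ 2 - D v = w ^ 2 + D w := by
    apply mul_left_cancel₀ hf0
    rw [e1] at e3
    linear_combination -e3 + (v + w) * e2
  have e5 : f = z + 2 * v ^ 2 - 2 * D v := by linear_combination hf - 2 * e4
  refine ⟨e5, ?_⟩
  have := congrArg D e5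
  simp only [map_add, map_sub, Derivation.leibniz, Derivation.leibniz_pow, smul_eq_mul, hz, D2,
      nsmul_eq_mul] at this
  push_cast at this
  linear_combination this - e1 - 2 * e2 + 2 * v * e5

/-- In a differential field with `z' = 1`, the recurrence of the Yablonskii–Vorob'ev polynomials
makes `w = q_n'/q_n - q_{n+1}'/q_{n+1}` a solution of the second Painlevé equation with parameter
`n + 1` (both sides doubled). -/
theorem painleve_of_toda [CharZero K] {z : K} (hz : D z = 1) (hz0 : z ≠ 0) (q : ℕ → K)
    (hq : ∀ n, q n ≠ 0) (h0 : q 0 = 1) (h1 : q 1 = z)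
    (hrec : ∀ n, q (n + 2) * q n =
      z * q (n + 1) ^ 2 - 4 * (q (n + 1) * D (D (q (n + 1))) - D (q (n + 1)) ^ 2)) (n : ℕ) :
    2 * D (D (D (q n) / q n - D (q (n + 1)) / q (n + 1))) =
      4 * (D (q n) / q n - D (q (n + 1)) / q (n + 1)) ^ 3
        + 2 * z * (D (q n) / q n - D (q (n + 1)) / q (n + 1)) + 2 * (n + 1) := by
  set h : ℕ → K := fun n => D (q n) / q n with hh
  have hf : ∀ n, q (n + 2) * q n / q (n + 1) ^ 2 = z - 4 * D (h (n + 1)) := fun n => by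
    have := hq (n + 1)
    rw [hrec]
    simp only [hh, Derivation.leibniz_div, smul_eq_mul]
    field_simp
  -- The first conjunct is the bilinear relation between consecutive `q`s; it identifies
  -- `q (n + 2) * q n / q (n + 1) ^ 2` with `z + 2w² + 2w'`, and must be carried along.
  have key : (h n - h (n + 1)) ^ 2 + D (h n) + D (h (n + 1)) = 0 ∧
      2 * D (D (h n - h (n + 1))) = 4 * (h n - h (n + 1)) ^ 3
        + 2 * z * (h n - h (n + 1)) + 2 * (n + 1) := by
    induction n with
    | zero =>
      have e0 : h 0 = 0 := by simp [hh, h0]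
      have e1 : h 1 = z⁻¹ := by simp [hh, h1, hz]
      have e2 : D z⁻¹ = - z⁻¹ ^ 2 := by simp [Derivation.leibniz_inv, hz]
      have e3 : D (- z⁻¹ ^ 2) = 2 * z⁻¹ ^ 3 := by
        simp only [map_neg, Derivation.leibniz_pow, e2, smul_eq_mul, nsmul_eq_mul]
        push_cast; ring
      simp only [zero_add, e0, e1, map_zero, zero_sub, e2, map_neg] at e3 ⊢
      rw [e3]
      refine ⟨by ring, ?_⟩
      field_simp
      push_cast
      ring
    | succ n ih =>
      obtain ⟨iA, iP⟩ := ih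
      have s := backlund_step D (z := z) (w := h n - h (n + 1)) (v := h (n + 1) - h (n + 2))
        (f := q (n + 2) * q n / q (n + 1) ^ 2) (k := ((2 * n + 3 : ℕ) : K)) hz
        (by simp [hq]) (by rw [hf, map_sub]; linear_combination -2 * iA)
        (by rw [toda_logDeriv D (hq _) (hq _) (hq _)]; simp only [hh]; ring)
        (by rw [iP]; push_cast; ring) (D.map_natCast _)
      rw [hf] at s
      obtain ⟨s1, s2⟩ := s
      constructor
      · rw [map_sub] at s1
        have : (2 : K) ≠ 0 := two_ne_zero
        apply mul_left_cancel₀ this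
        linear_combination -s1
      · rw [s2]; push_cast; ring
  exact key.2
end

/-! ### Expansion of solutions at infinity -/

theorem coeff_two_mul (H : PowerSeries ℂ) (j : ℕ) :
    PowerSeries.coeff j (2 * H) = 2 * PowerSeries.coeff j H := by
  rw [← map_ofNat PowerSeries.C 2, PowerSeries.coeff_C_mul]

/-- The equation `F = t³ (E F - 2 F³) - s`, with `E` a diagonal operator on coefficients, determines
`F`: the coefficient of `t ^ (i + 3)` is a function of the coefficients up to `t ^ i`. -/
theorem coeff_ext_of_recurrence {F G : PowerSeries ℂ} {e : ℕ → ℂ} {s : ℂ}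
    (hF : F = PowerSeries.X ^ 3 *
      (PowerSeries.mk (fun j => e j * PowerSeries.coeff j F) - 2 * F ^ 3) - PowerSeries.C s)
    (hG : G = PowerSeries.X ^ 3 *
      (PowerSeries.mk (fun j => e j * PowerSeries.coeff j G) - 2 * G ^ 3) - PowerSeries.C s) :
    F = G := by
  ext j
  induction j using Nat.strong_induction_on with
  | _ j ih =>
  rw [hF, hG]
  rcases lt_or_ge j 3 with hj | hj
  · simp only [map_sub, PowerSeries.coeff_X_pow_mul', not_le.mpr hj, if_false]
  · obtain ⟨i, rfl⟩ := Nat.exists_eq_add_of_le' hj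
    have ht : F.trunc (i + 1) = G.trunc (i + 1) := by
      ext k
      rw [PowerSeries.coeff_trunc, PowerSeries.coeff_trunc]
      split_ifs with hk
      · exact ih k (by omega)
      · rfl
    have hc : PowerSeries.coeff i (F ^ 3) = PowerSeries.coeff i (G ^ 3) := by
      have := PowerSeries.trunc_trunc_pow F (i + 1) 3
      rw [ht, PowerSeries.trunc_trunc_pow] at this
      have := congrArg (fun p : ℂ[X] => p.coeff i) this
      simpa [PowerSeries.coeff_trunc] using this.symm
    simp only [map_sub, PowerSeries.coeff_X_pow_mul, PowerSeries.coeff_mk, coeff_two_mul, hc,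
      ih i (by omega)]

/-- The series `∑ γ_l t^{3l}` built from the recursion defining the `c_l` solves the equation of
`coeff_ext_of_recurrence`; it is obtained from the equation for `∑ γ_l t^l` by substituting `t³`. -/
theorem expand_recurrence {γ : ℕ → ℂ} {s : ℂ} (h0 : γ 0 = -s)
    (hrec : ∀ l : ℕ, γ (l + 1) = (3 * l + 2) * (3 * l + 1) * γ l -
        2 * ∑ m ∈ Finset.range (l + 1), ∑ k ∈ Finset.range (m + 1),
              γ k * γ (m - k) * γ (l - m)) :
    (PowerSeries.mk γ).expand 3 three_ne_zero = PowerSeries.X ^ 3 *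
      (PowerSeries.mk (fun j : ℕ => ((j : ℂ) + 1) * (j + 2) *
        PowerSeries.coeff j ((PowerSeries.mk γ).expand 3 three_ne_zero)) -
        2 * ((PowerSeries.mk γ).expand 3 three_ne_zero) ^ 3) - PowerSeries.C s := by
  have hcube : ∀ l, PowerSeries.coeff l (PowerSeries.mk γ ^ 3) =
      ∑ m ∈ Finset.range (l + 1), ∑ k ∈ Finset.range (m + 1),
              γ k * γ (m - k) * γ (l - m) := fun l => by
    rw [pow_succ, pow_two, PowerSeries.coeff_mul,
      Finset.Nat.sum_antidiagonal_eq_sum_range_succ_mk]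
    refine Finset.sum_congr rfl fun m _ => ?_
    rw [PowerSeries.coeff_mul, Finset.Nat.sum_antidiagonal_eq_sum_range_succ_mk]
    simp [Finset.sum_mul]
  have hΓ : PowerSeries.mk γ = PowerSeries.X *
      (PowerSeries.mk (fun l : ℕ => (3 * (l : ℂ) + 1) * (3 * l + 2) * γ l)
        - 2 * PowerSeries.mk γ ^ 3) - PowerSeries.C s := by
    ext l
    cases l with
    | zero => simp [h0]
    | succ l =>
      rw [PowerSeries.coeff_mk, hrec, map_sub, PowerSeries.coeff_succ_X_mul, map_sub, coeff_two_mul, hcube]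
      simp only [PowerSeries.coeff_mk, PowerSeries.coeff_C, Nat.succ_ne_zero, if_false]
      ring
  have hE : PowerSeries.mk (fun j : ℕ => ((j : ℂ) + 1) * (j + 2) *
        PowerSeries.coeff j ((PowerSeries.mk γ).expand 3 three_ne_zero)) =
      (PowerSeries.mk (fun l : ℕ => (3 * (l : ℂ) + 1) * (3 * l + 2) * γ l)).expand 3
        three_ne_zero := by
    ext j
    rw [PowerSeries.coeff_mk, PowerSeries.coeff_expand, PowerSeries.coeff_expand]
    split_ifs with hj
    · obtain ⟨l, rfl⟩ := hj
      simp
    · simp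
  rw [hE]
  conv_lhs => rw [hΓ]
  rw [map_sub, map_mul, map_sub, map_mul, map_pow, map_ofNat, PowerSeries.expand_C,
    PowerSeries.expand_X]

/-- Second derivative with respect to `z = 1 / t` of `∑ b_j z^{-j-1}`. -/
theorem deriv_deriv_X_mul_mk {d : Derivation ℂ (PowerSeries ℂ) (PowerSeries ℂ)}
    (hd : ∀ F, d F = -(PowerSeries.X ^ 2 * PowerSeries.derivative ℂ F)) (b : ℕ → ℂ) :
    d (d (PowerSeries.X * PowerSeries.mk b)) = PowerSeries.X ^ 3 *
      PowerSeries.mk (fun j : ℕ => ((j : ℂ) + 1) * (j + 2) * b j) := by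
  have e1 : d (PowerSeries.X * PowerSeries.mk b) =
      -(PowerSeries.X ^ 2 * PowerSeries.mk (fun j : ℕ => ((j : ℂ) + 1) * b j)) := by
    rw [hd]
    congr 2
    ext j
    rw [PowerSeries.coeff_derivative, PowerSeries.coeff_succ_X_mul]
    simp [mul_comm]
  have e2 : PowerSeries.derivative ℂ
      (PowerSeries.X ^ 2 * PowerSeries.mk (fun j : ℕ => ((j : ℂ) + 1) * b j)) =
      PowerSeries.X * PowerSeries.mk (fun j : ℕ => ((j : ℂ) + 1) * (j + 2) * b j) := by
    ext j
    rw [PowerSeries.coeff_derivative]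
    cases j with
    | zero => simp [PowerSeries.coeff_X_pow_mul']
    | succ j =>
      rw [PowerSeries.coeff_succ_X_mul, add_assoc, one_add_one_eq_two, PowerSeries.coeff_X_pow_mul]
      simp
      ring
  rw [e1, map_neg, hd, e2]
  ring

/-! ### Roots and logarithmic derivatives -/

/-- Monicity follows from the recurrence alone: its right-hand side is monic because the subtracted
term has degree at most `2 * deg Q_{n+1}`, and a monic product with a monic factor has a monic
cofactor. -/
theorem monic_of_toda {Q : ℕ → ℚ[X]}
    (hQ0 : Q 0 = 1) (hQ1 : Q 1 = X)
    (hQrec : ∀ n : ℕ, Q (n + 2) * Q n =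
      X * (Q (n + 1)) ^ 2 -
        4 * (Q (n + 1) * derivative (derivative (Q (n + 1))) -
              (derivative (Q (n + 1))) ^ 2)) (n : ℕ) : (Q n).Monic := by
  suffices (Q n).Monic ∧ (Q (n + 1)).Monic from this.1
  induction n with
  | zero => simp [hQ0, hQ1, monic_X]
  | succ n ih =>
    obtain ⟨h0, h1⟩ := ih
    refine ⟨h1, Monic.of_mul_monic_right h0 ?_⟩
    rw [hQrec]
    set P := Q (n + 1)
    have hm : (X * P ^ 2).Monic := monic_X.mul (h1.pow 2)
    refine hm.sub_of_left (degree_lt_degree ?_)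
    rw [(monic_X).natDegree_mul (h1.pow 2), h1.natDegree_pow, natDegree_X]
    have hd1 := natDegree_derivative_le P
    have hd2 := natDegree_derivative_le (derivative P)
    have : (4 * (P * derivative (derivative P) - derivative P ^ 2)).natDegree
        ≤ 2 * P.natDegree := by
      have : (4 : ℚ[X]) = C 4 := rfl
      rw [this]
      refine (natDegree_C_mul_le _ _).trans ((natDegree_sub_le _ _).trans (max_le ?_ ?_))
      · exact natDegree_mul_le.trans (by omega)
      · exact natDegree_pow_le.trans (by omega)
    omega

/-- With `z = 1 / t`, the logarithmic derivative of `∏ (z - a)` is the generating series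
`∑ s_m t^{m+1}` of the power sums of the `a`s, since `1 / (z - a) = ∑ a^m t^{m+1}`. -/
theorem logDeriv_prod_linear {K : Type*} [Field K] [Algebra (PowerSeries ℂ) K]
    [IsFractionRing (PowerSeries ℂ) K] (D : Derivation ℤ K K) {z : K}
    (hz : z * algebraMap (PowerSeries ℂ) K PowerSeries.X = 1) (hDz : D z = 1)
    (hDC : ∀ a, D (algebraMap (PowerSeries ℂ) K (PowerSeries.C a)) = 0) (s : Multiset ℂ) :
    (s.map fun a => z - algebraMap (PowerSeries ℂ) K (PowerSeries.C a)).prod ≠ 0 ∧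
    D (s.map fun a => z - algebraMap (PowerSeries ℂ) K (PowerSeries.C a)).prod /
      (s.map fun a => z - algebraMap (PowerSeries ℂ) K (PowerSeries.C a)).prod =
    algebraMap (PowerSeries ℂ) K
      (PowerSeries.X * PowerSeries.mk fun m => (s.map (· ^ m)).sum) := by
  induction s using Multiset.induction_on with
  | empty =>
    have : (PowerSeries.mk fun _ => (0 : ℂ)) = 0 := by ext; simp
    simp [this]
  | cons a s ih =>
    obtain ⟨i0, i1⟩ := ih
    have hg : (z - algebraMap (PowerSeries ℂ) K (PowerSeries.C a)) *
        algebraMap (PowerSeries ℂ) K (PowerSeries.X * PowerSeries.mk fun m => a ^ m) = 1 := by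
      have : (1 - PowerSeries.C a * PowerSeries.X) * (PowerSeries.mk fun m => a ^ m) = 1 := by
        ext j
        rw [sub_mul, one_mul, mul_assoc, map_sub, PowerSeries.coeff_C_mul]
        cases j with
        | zero => simp
        | succ j => rw [PowerSeries.coeff_succ_X_mul]; simp [pow_succ']
      have h := congrArg (algebraMap (PowerSeries ℂ) K) this
      simp only [map_mul, map_sub, map_one] at h ⊢
      linear_combination h + algebraMap (PowerSeries ℂ) K (PowerSeries.mk fun m => a ^ m) * hz
    have hne := left_ne_zero_of_mul_eq_one hg
    have hinv := eq_inv_of_mul_eq_one_right hg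
    have hsum : (PowerSeries.mk fun m => ((a ::ₘ s).map (· ^ m)).sum) =
        (PowerSeries.mk fun m => a ^ m) + PowerSeries.mk fun m => (s.map (· ^ m)).sum := by
      ext; simp
    rw [hsum, mul_add, map_add, ← i1, hinv, Multiset.map_cons, Multiset.prod_cons]
    refine ⟨mul_ne_zero hne i0, ?_⟩
    rw [Derivation.leibniz, map_sub, hDz, hDC]
    simp only [smul_eq_mul]
    field_simp
    ring

/-- The differences `s_{n,m} - s_{n+1,m}` have generating series `∑ γ_l t^{3l}`, where `γ_l` obeys the
recursion of `c_l(n + 1)`. The field `K` is a variable so that its elaborated instances are those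
of an abstract field. -/
theorem mk_powerSum_sub
    (K : Type*) [Field K] [Algebra (PowerSeries ℂ) K] [IsFractionRing (PowerSeries ℂ) K]
    {Q : ℕ → ℚ[X]}
    (hQ0 : Q 0 = 1) (hQ1 : Q 1 = X)
    (hQrec : ∀ n : ℕ, Q (n + 2) * Q n =
      X * (Q (n + 1)) ^ 2 -
        4 * (Q (n + 1) * derivative (derivative (Q (n + 1))) -
              (derivative (Q (n + 1))) ^ 2))
    {γ : ℕ → ℂ} (n : ℕ) (h0 : γ 0 = -((n : ℂ) + 1))
    (hrec : ∀ l : ℕ, γ (l + 1) = (3 * l + 2) * (3 * l + 1) * γ l -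
        2 * ∑ m ∈ Finset.range (l + 1), ∑ k ∈ Finset.range (m + 1),
              γ k * γ (m - k) * γ (l - m)) :
    (PowerSeries.mk fun m => powerSum Q n m - powerSum Q (n + 1) m) =
      (PowerSeries.mk γ).expand 3 three_ne_zero := by
  let d : Derivation ℂ (PowerSeries ℂ) (PowerSeries ℂ) :=
    (-(PowerSeries.X ^ 2 : PowerSeries ℂ)) • PowerSeries.derivative ℂ
  have hd : ∀ F, d F = -(PowerSeries.X ^ 2 * PowerSeries.derivative ℂ F) := fun F => by
    simp [d]
  clear_value d
  let ι : PowerSeries ℂ →+* K := algebraMap (PowerSeries ℂ) K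
  have hι : Function.Injective ι := IsFractionRing.injective (PowerSeries ℂ) K
  have : CharZero K := charZero_of_injective_ringHom
    (f := ι.comp PowerSeries.C) (hι.comp PowerSeries.C_injective)
  obtain ⟨D, hD⟩ := exists_derivation_fractionField (K := K) d
  have hD : ∀ a, D (ι a) = ι (d a) := hD
  have hX : ι PowerSeries.X ≠ 0 := (map_ne_zero_iff ι hι).2 PowerSeries.X_ne_zero
  let z : K := (ι PowerSeries.X)⁻¹
  have hz : z * ι PowerSeries.X = 1 := inv_mul_cancel₀ hX
  have hz0 : z ≠ 0 := inv_ne_zero hX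
  have hDz : D z = 1 := by
    rw [Derivation.leibniz_inv, hD, hd]
    simp only [PowerSeries.derivative_X, mul_one, map_neg, map_pow, smul_eq_mul]
    field_simp
  have hDC : ∀ a, D (ι (PowerSeries.C a)) = 0 := fun a => by rw [hD, hd]; simp
  -- substitution of `z = 1 / t` into polynomials; it intertwines `d/dX` and `D`
  let ψ : ℂ[X] →+* K := eval₂RingHom (ι.comp PowerSeries.C) z
  have hψX : ψ X = z := by simp [ψ]
  have hψC : ∀ a, ψ (C a) = ι (PowerSeries.C a) := fun a => by simp [ψ]
  have hψD : ∀ P, D (ψ P) = ψ (derivative P) := fun P => by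
    induction P using Polynomial.induction_on' with
    | add p q hp hq => simp only [map_add, hp, hq]
    | monomial k a =>
      rw [← C_mul_X_pow_eq_monomial, derivative_C_mul_X_pow]
      simp only [map_mul, map_pow, hψC, hψX, Derivation.leibniz, Derivation.leibniz_pow, hDC, hDz,
        smul_eq_mul, nsmul_eq_mul, map_natCast]
      ring
  clear_value ψ
  let q : ℕ → K := fun n => ψ ((Q n).map (algebraMap ℚ ℂ))
  have hq : ∀ n, q n = (((Q n).map (algebraMap ℚ ℂ)).roots.map
      fun a => z - ι (PowerSeries.C a)).prod := fun n => by
    have hm := (monic_of_toda hQ0 hQ1 hQrec n).map (algebraMap ℚ ℂ)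
    have := (IsAlgClosed.splits ((Q n).map (algebraMap ℚ ℂ))).eq_prod_roots_of_monic hm
    have := congrArg ψ this
    rw [map_multiset_prod, Multiset.map_map] at this
    simpa [Function.comp_def, hψX, hψC] using this
  have hL := fun n => logDeriv_prod_linear D (z := z) hz hDz hDC ((Q n).map (algebraMap ℚ ℂ)).roots
  have hq0 : ∀ n, q n ≠ 0 := fun n => by rw [hq]; exact (hL n).1
  have hlog : ∀ n, D (q n) / q n =
      ι (PowerSeries.X * PowerSeries.mk fun m => powerSum Q n m) := fun n => by
    rw [hq]; exact (hL n).2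
  have hqrec : ∀ n, q (n + 2) * q n =
      z * q (n + 1) ^ 2 - 4 * (q (n + 1) * D (D (q (n + 1))) - D (q (n + 1)) ^ 2) := fun n => by
    simp only [q, hψD, ← map_mul, ← Polynomial.map_mul, hQrec]
    simp only [derivative_map, Polynomial.map_sub, Polynomial.map_mul, Polynomial.map_pow, map_X,
      Polynomial.map_ofNat, map_sub, map_mul, map_pow, map_ofNat, hψX]
  have hP := painleve_of_toda D hDz hz0 q hq0 (by simp [q, hQ0]) (by simp [q, hQ1, hψX]) hqrec n
  set B : PowerSeries ℂ := PowerSeries.mk fun m => powerSum Q n m - powerSum Q (n + 1) m with hB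
  have hw : D (q n) / q n - D (q (n + 1)) / q (n + 1) = ι (PowerSeries.X * B) := by
    rw [hlog, hlog, ← map_sub, ← mul_sub]
    congr 2
  rw [hw, hD, hD, deriv_deriv_X_mul_mk hd] at hP
  set E : PowerSeries ℂ := PowerSeries.mk fun j : ℕ =>
    ((j : ℂ) + 1) * (j + 2) * (powerSum Q n j - powerSum Q (n + 1) j) with hE
  have hC : ι (PowerSeries.C ((n : ℂ) + 1)) = (n : K) + 1 := by simp
  -- the term `z * w` is a power series because `w` is divisible by `t`
  have hPS : B = PowerSeries.X ^ 3 * (E - 2 * B ^ 3) - PowerSeries.C ((n : ℂ) + 1) := by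
    apply hι
    have h2 : (2 : K) ≠ 0 := two_ne_zero
    apply mul_left_cancel₀ h2
    simp only [map_sub, map_mul, map_pow, map_ofNat, hC] at hP ⊢
    linear_combination -hP - 2 * ι B * hz
  refine coeff_ext_of_recurrence (e := fun j : ℕ => ((j : ℂ) + 1) * (j + 2))
    (s := (n : ℂ) + 1) ?_ (expand_recurrence h0 hrec)
  convert hPS using 5
  simp [hB]

end YablonskiiVorobev

/-- For every `n ≥ 2` and `m ≥ 1`: if `3 ∤ m` then `s_{n,m} = s_{n-1,m}`, and
if `m = 3 l` with `l ≥ 1` then `s_{n,3l} - s_{n-1,3l} = - c_l(n)`. -/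
theorem powerSum_difference
    (Q : ℕ → Polynomial ℚ)
    (hQ0 : Q 0 = 1) (hQ1 : Q 1 = X)
    (hQrec : ∀ n : ℕ, Q (n + 2) * Q n =
      X * (Q (n + 1)) ^ 2 -
        4 * (Q (n + 1) * derivative (derivative (Q (n + 1))) -
              (derivative (Q (n + 1))) ^ 2))
    (c : ℕ → Polynomial ℚ)
    (hc0 : c 0 = -X)
    (hcrec : ∀ l : ℕ, c (l + 1) =
      (C (((3 * l + 2) * (3 * l + 1) : ℕ) : ℚ)) * c l -
        2 * ∑ m ∈ Finset.range (l + 1), ∑ k ∈ Finset.range (m + 1),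
              c k * c (m - k) * c (l - m)) :
    ∀ n : ℕ, 2 ≤ n → ∀ m : ℕ, 1 ≤ m →
      (¬ (3 ∣ m) → powerSum Q n m = powerSum Q (n - 1) m) ∧
      (∀ l : ℕ, 1 ≤ l → m = 3 * l →
        powerSum Q n m - powerSum Q (n - 1) m = - (((c l).eval (n : ℚ) : ℚ) : ℂ)) := by
  intro n hn m hm
  obtain ⟨n, rfl⟩ : ∃ k, n = k + 1 := ⟨n - 1, by omega⟩
  have key := YablonskiiVorobev.mk_powerSum_sub (FractionRing (PowerSeries ℂ)) hQ0 hQ1 hQrec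
    (γ := fun l => (((c l).eval ((n + 1 : ℕ) : ℚ) : ℚ) : ℂ)) n
    (by simp [hc0]) (fun l => by
      simp only [hcrec, eval_sub, eval_mul, eval_C, eval_finsetSum, eval_ofNat]
      push_cast
      ring)
  have hcoeff := congrArg (PowerSeries.coeff m) key
  rw [PowerSeries.coeff_mk, PowerSeries.coeff_expand] at hcoeff
  rw [Nat.add_sub_cancel]
  constructor
  · intro h
    rw [if_neg h] at hcoeff
    exact (sub_eq_zero.1 hcoeff).symm
  · rintro l - rfl
    simp at hcoeff
    push_cast at hcoeff ⊢
    rw [← hcoeff]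
    ring
end

section
/- For every integer l ≥ 1 there exists a polynomial P_l with rational coefficients of degree exactly 2(l + 1) such that s_{n,3l} = P_l(n) for all integers n ≥ 2. -/
open Polynomial

/-! ### Polynomials with positive top coefficient, and their antidifferences -/

/-- Antidifferences exist: `X ^ i` is the difference of the Bernoulli polynomial
`B_{i+1} / (i + 1)`. -/
theorem exists_antidiff (d : ℕ) : ∀ p : ℚ[X], p.natDegree ≤ d →
    ∃ q : ℚ[X], q.natDegree ≤ d + 1 ∧ q.coeff (d + 1) = p.coeff d / (d + 1) ∧
      ∀ x : ℚ, q.eval (1 + x) - q.eval x = p.eval x := by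
  intro p hp
  refine ⟨∑ i ∈ Finset.range (d + 1), C (p.coeff i / (i + 1)) * Polynomial.bernoulli (i + 1), ?_, ?_, ?_⟩
  · refine natDegree_sum_le_of_forall_le _ _ fun i hi => ?_
    refine (natDegree_C_mul_le _ _).trans ?_
    rw [natDegree_le_iff_coeff_eq_zero]
    intro N hN
    rw [coeff_bernoulli, if_neg]
    have := Finset.mem_range.1 hi
    omega
  · rw [finsetSum_coeff, Finset.sum_eq_single_of_mem d (by simp)]
    · rw [coeff_C_mul, coeff_bernoulli]
      simp
    · intro i hi hne
      have := Finset.mem_range.1 hi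
      rw [coeff_C_mul, coeff_bernoulli, if_neg (by omega), mul_zero]
  · intro x
    rw [eval_finsetSum, eval_finsetSum, ← Finset.sum_sub_distrib,
      eval_eq_sum_range' (Nat.lt_succ_of_le hp)]
    refine Finset.sum_congr rfl fun i _ => ?_
    rw [eval_C_mul, eval_C_mul, bernoulli_eval_one_add]
    have : (i : ℚ) + 1 ≠ 0 := by positivity
    simp only [Nat.add_sub_cancel]
    push_cast
    field_simp
    ring

/-- `p` has degree at most `d`, and its coefficient in degree `d` is nonnegative
(possibly zero, so that `Semi d 0` holds for every `d`). -/
def Semi (d : ℕ) (p : ℚ[X]) : Prop := p.natDegree ≤ d ∧ 0 ≤ p.coeff d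

/-- `p` has degree exactly `d` and positive leading coefficient. -/
def Good (d : ℕ) (p : ℚ[X]) : Prop := p.natDegree ≤ d ∧ 0 < p.coeff d

theorem Good.semi {d : ℕ} {p : ℚ[X]} (h : Good d p) : Semi d p := ⟨h.1, h.2.le⟩

theorem Semi.zero (d : ℕ) : Semi d 0 := by simp [Semi]

theorem Semi.add {d : ℕ} {p q : ℚ[X]} (hp : Semi d p) (hq : Semi d q) : Semi d (p + q) :=
  ⟨natDegree_add_le_of_degree_le hp.1 hq.1, by rw [coeff_add]; exact add_nonneg hp.2 hq.2⟩

theorem Good.add_semi {d : ℕ} {p q : ℚ[X]} (hp : Good d p) (hq : Semi d q) : Good d (p + q) :=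
  ⟨natDegree_add_le_of_degree_le hp.1 hq.1, by rw [coeff_add]; exact add_pos_of_pos_of_nonneg hp.2 hq.2⟩

theorem Semi.mul {d e : ℕ} {p q : ℚ[X]} (hp : Semi d p) (hq : Semi e q) : Semi (d + e) (p * q) :=
  ⟨natDegree_mul_le_of_le hp.1 hq.1, by
    rw [coeff_mul_add_eq_of_natDegree_le hp.1 hq.1]; exact mul_nonneg hp.2 hq.2⟩

theorem Semi.C_mul {d : ℕ} {p : ℚ[X]} (c : ℚ) (hc : 0 ≤ c) (hp : Semi d p) : Semi d (C c * p) :=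
  ⟨(natDegree_C_mul_le _ _).trans hp.1, by rw [coeff_C_mul]; exact mul_nonneg hc hp.2⟩

theorem Good.C_mul {d : ℕ} {p : ℚ[X]} (c : ℚ) (hc : 0 < c) (hp : Good d p) : Good d (C c * p) :=
  ⟨(natDegree_C_mul_le _ _).trans hp.1, by rw [coeff_C_mul]; exact mul_pos hc hp.2⟩

theorem Semi.sum {ι : Type*} {d : ℕ} (s : Finset ι) (f : ι → ℚ[X])
    (h : ∀ i ∈ s, Semi d (f i)) : Semi d (∑ i ∈ s, f i) :=
  Finset.sum_induction f (Semi d) (fun _ _ => Semi.add) (Semi.zero d) h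

theorem Good.degree_eq {d : ℕ} {p : ℚ[X]} (h : Good d p) : p.degree = d :=
  degree_eq_of_le_of_coeff_ne_zero (natDegree_le_iff_degree_le.1 h.1) h.2.ne'

theorem Good.comp_X_add_C {d : ℕ} {p : ℚ[X]} (c : ℚ) (h : Good d p) : Good d (p.comp (X + C c)) := by
  refine ⟨?_, ?_⟩
  · rw [natDegree_comp, natDegree_X_add_C, mul_one]; exact h.1
  · have hn : p.natDegree = d := le_antisymm h.1 (le_natDegree_of_ne_zero h.2.ne')
    have := leadingCoeff_comp (p := p) (q := X + C c) (by simp)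
    rw [leadingCoeff, natDegree_comp, natDegree_X_add_C, mul_one, hn] at this
    rw [this]
    simp [leadingCoeff, hn, h.2]

/-- An antidifference can be prescribed at one point, by adding a constant. -/
theorem Good.exists_antidiff {d : ℕ} {p : ℚ[X]} (h : Good d p) (n v : ℚ) :
    ∃ q, Good (d + 1) q ∧ q.eval n = v ∧ ∀ x, q.eval (1 + x) - q.eval x = p.eval x := by
  obtain ⟨q, h1, h2, h3⟩ := _root_.exists_antidiff d p h.1
  refine ⟨q + C (v - q.eval n), ⟨?_, ?_⟩, by simp, fun x => by simp [h3 x]⟩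
  · exact natDegree_add_le_of_degree_le h1 (by simp)
  · rw [coeff_add, h2, coeff_C_succ, add_zero]
    exact div_pos h.2 (by positivity)

theorem eq_of_second_diff {f g : ℕ → ℂ} (h0 : f 0 = g 0) (h1 : f 1 = g 1)
    (h : ∀ n, f (n + 2) + f n - 2 * f (n + 1) = g (n + 2) + g n - 2 * g (n + 1)) (n : ℕ) :
    f n = g n := by
  induction n using Nat.twoStepInduction with
  | zero => exact h0
  | one => exact h1
  | more n ih1 ih2 =>
    have := h n
    rw [ih1, ih2] at this
    linear_combination this

/-- A sequence with rational initial values whose second difference is a polynomial of degree `d`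
with positive leading coefficient is itself such a polynomial, of degree `d + 2`. The second
difference `f (n + 2) - 2 f (n + 1) + f n` is centred at `n + 1`, and `p` is evaluated there. -/
theorem Good.exists_second_antidiff {d : ℕ} {p : ℚ[X]} (h : Good d p) (f : ℕ → ℂ) (u v : ℚ)
    (h0 : f 0 = u) (h1 : f 1 = v)
    (hf : ∀ n, f (n + 2) + f n - 2 * f (n + 1) = ((p.eval ((n + 1 : ℕ) : ℚ) : ℚ) : ℂ)) :
    ∃ q, Good (d + 2) q ∧ ∀ n : ℕ, f n = ((q.eval (n : ℚ) : ℚ) : ℂ) := by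
  obtain ⟨r, hr, hrv, hrd⟩ := (h.comp_X_add_C 1).exists_antidiff 0 (v - u)
  obtain ⟨q, hq, hqv, hqd⟩ := hr.exists_antidiff 0 u
  refine ⟨q, hq, eq_of_second_diff (by simp [h0, hqv]) ?_ fun n => ?_⟩
  · have := hqd 0
    rw [hqv, hrv] at this
    rw [h1]
    congr 1
    simp at this ⊢
    linarith
  · rw [hf]
    have e1 := hqd n
    have e2 := hqd (1 + n)
    have e3 := hrd n
    simp only [eval_comp, eval_add, eval_X, eval_C] at e3
    have c1 : ((n + 1 : ℕ) : ℚ) = 1 + n := by push_cast; ring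
    have c2 : ((n + 2 : ℕ) : ℚ) = 1 + (1 + n) := by push_cast; ring
    rw [c1, c2, add_comm 1 (n : ℚ)] 
    rw [add_comm 1 (n : ℚ)] at e1 e2 e3
    norm_cast
    push_cast
    rw [← e3, ← e1, ← e2]
    ring

/-! ### The recursion for the signed power sums -/

/-- The core induction. Here `a m n` plays the role of `(-1) ^ m * s_{n,m}`, and `d m n` is its
second difference in `n`, centred at `n + 1`. All coefficients in `d3` being nonnegative, leading
terms cannot cancel. -/
theorem exists_good_of_rec (a : ℕ → ℕ → ℂ)
    (h0 : ∀ m, a m 0 = 0) (h1 : ∀ m, a m 1 = if m = 0 then 1 else 0)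
    (d : ℕ → ℕ → ℂ) (hd : ∀ m n, d m n = a m (n + 2) + a m n - 2 * a m (n + 1))
    (d0 : ∀ n, d 0 n = 1) (d1 : ∀ n, d 1 n = 0) (d2 : ∀ n, d 2 n = 0)
    (d3 : ∀ m n, d (m + 3) n = 4 * (m + 1) * (m + 2) * a m (n + 1)
      + 4 * ∑ x ∈ Finset.HasAntidiagonal.antidiagonal m, (x.1 + 1) * a x.1 (n + 1) * d x.2 n) (m : ℕ) :
    ∃ P D : ℚ[X], (∀ n : ℕ, a m n = ((P.eval (n : ℚ) : ℚ) : ℂ)) ∧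
      (∀ n : ℕ, d m n = ((D.eval ((n + 1 : ℕ) : ℚ) : ℚ) : ℂ)) ∧
      (∀ l, m = 3 * l → Good (2 * l + 2) P ∧ Good (2 * l) D) ∧
      (¬ 3 ∣ m → P = 0 ∧ D = 0) := by
  -- It suffices to describe the second difference `d m`: summing twice then gives `a m`.
  have key : ∀ m (D : ℚ[X]), (∀ n : ℕ, d m n = ((D.eval ((n + 1 : ℕ) : ℚ) : ℚ) : ℂ)) →
      (∀ l, m = 3 * l → Good (2 * l) D) → (¬ 3 ∣ m → D = 0) →
      ∃ P D : ℚ[X], (∀ n : ℕ, a m n = ((P.eval (n : ℚ) : ℚ) : ℂ)) ∧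
      (∀ n : ℕ, d m n = ((D.eval ((n + 1 : ℕ) : ℚ) : ℚ) : ℂ)) ∧
      (∀ l, m = 3 * l → Good (2 * l + 2) P ∧ Good (2 * l) D) ∧
      (¬ 3 ∣ m → P = 0 ∧ D = 0) := by
    intro m D hD hG hZ
    by_cases hm : 3 ∣ m
    · obtain ⟨l, rfl⟩ := hm
      obtain ⟨P, hP, hPa⟩ := (hG l rfl).exists_second_antidiff (a (3 * l)) 0
        (if 3 * l = 0 then 1 else 0) (by simp [h0]) (by rw [h1]; split_ifs <;> simp)
        (fun n => by rw [← hd, hD])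
      refine ⟨P, D, hPa, hD, fun l' hl' => ?_, fun h => absurd (dvd_mul_right 3 l) h⟩
      obtain rfl : l = l' := by omega
      exact ⟨hP, hG l rfl⟩
    · refine ⟨0, D, eq_of_second_diff (by simp [h0]) ?_ fun n => ?_, hD,
        fun l hl => absurd ⟨l, hl⟩ hm, fun _ => ⟨rfl, hZ hm⟩⟩
      · rw [h1, if_neg (by rintro rfl; simp at hm)]; simp
      · rw [← hd, hD, hZ hm]; simp
  induction m using Nat.strong_induction_on with
  | _ k ih =>
  match k, ih with
  | 0, _ =>
    refine key 0 1 (fun n => by simp [d0]) (fun l hl => ?_) (by simp)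
    obtain rfl : l = 0 := by omega
    simp [Good]
  | 1, _ => exact key 1 0 (fun n => by simp [d1]) (fun l hl => by omega) (fun _ => rfl)
  | 2, _ => exact key 2 0 (fun n => by simp [d2]) (fun l hl => by omega) (fun _ => rfl)
  | m + 3, ih =>
    choose! P D hP hD hG hZ using ih
    refine key (m + 3) (C (4 * (m + 1) * (m + 2) : ℚ) * P m
      + C 4 * ∑ x ∈ Finset.HasAntidiagonal.antidiagonal m, C (x.1 + 1 : ℚ) * P x.1 * D x.2) ?_ ?_ ?_
    · intro n
      rw [d3, hP m (by omega)]
      simp only [eval_add, eval_mul, eval_finsetSum, eval_C]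
      push_cast
      congr 2
      refine Finset.sum_congr rfl fun x hx => ?_
      have := Finset.HasAntidiagonal.mem_antidiagonal.1 hx
      rw [hP x.1 (by omega), hD x.2 (by omega)]
      push_cast
      rfl
    · intro l hl
      obtain ⟨l, rfl⟩ : ∃ l', l = l' + 1 := ⟨l - 1, by omega⟩
      obtain rfl : m = 3 * l := by omega
      refine ((hG _ (by omega) l rfl).1.C_mul _ (by positivity)).add_semi
        (Semi.C_mul _ (by norm_num) (Semi.sum _ _ fun x hx => ?_))
      have hx := Finset.HasAntidiagonal.mem_antidiagonal.1 hx
      -- Degrees add up: `(2 * i + 2) + 2 * (l - i) = 2 * (l + 1)`.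
      by_cases h3 : 3 ∣ x.1
      · obtain ⟨i, hi⟩ := h3
        have hj : x.2 = 3 * (l - i) := by omega
        have := ((hG x.1 (by omega) i hi).1.semi.C_mul (x.1 + 1 : ℚ) (by positivity)).mul
          (hG x.2 (by omega) _ hj).2.semi
        convert this using 1
        omega
      · rw [(hZ x.1 (by omega) h3).1, mul_zero, zero_mul]
        exact Semi.zero _
    · intro hm
      have hm' : ¬ 3 ∣ m := by omega
      rw [(hZ m (by omega) hm').1, Finset.sum_eq_zero]
      · simp
      · intro x hx
        have hx := Finset.HasAntidiagonal.mem_antidiagonal.1 hx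
        by_cases h3 : 3 ∣ x.1
        · rw [(hZ x.2 (by omega) (by omega)).2, mul_zero]
        · rw [(hZ x.1 (by omega) h3).1, mul_zero, zero_mul]

/-! ### Power sums and reversed polynomials -/

/-- The generating function `Σ_m s_m t^m` of the power sums `s_m` of the roots of `p`, counted
with multiplicity. -/
noncomputable def psGen (p : ℂ[X]) : PowerSeries ℂ :=
  PowerSeries.mk fun m => (p.roots.map (· ^ m)).sum

theorem geom_aux (a : ℂ) : (1 - PowerSeries.C a * PowerSeries.X) * (PowerSeries.mk fun m => a ^ m) = 1 := by
  ext n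
  rw [sub_mul, one_mul, mul_assoc, map_sub, PowerSeries.coeff_C_mul]
  cases n with
  | zero => simp
  | succ n => simp [PowerSeries.coeff_succ_X_mul, pow_succ', PowerSeries.coeff_one]

/-- The logarithmic derivative of `∏ (1 - a t)`, the reversal of `∏ (X - a)`. -/
theorem reverse_mul_psGen_prod (s : Multiset ℂ) :
    PowerSeries.X * PowerSeries.derivative ℂ (((s.map fun a => (X - C a : ℂ[X])).prod.reverse : ℂ[X]) : PowerSeries ℂ)
      = ((s.card : PowerSeries ℂ) - PowerSeries.mk fun m => (s.map (· ^ m)).sum)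
        * (((s.map fun a => (X - C a : ℂ[X])).prod.reverse : ℂ[X]) : PowerSeries ℂ) := by
  induction s using Multiset.induction_on with
  | empty =>
    have : (PowerSeries.mk fun m : ℕ => (0 : ℂ)) = 0 := by ext; simp
    have h1 : (1 : ℂ[X]).reverse = 1 := by simpa using reverse_C (1 : ℂ)
    simp [this, h1]
  | cons a s ih =>
    have hr : (X - C a : ℂ[X]).reverse = 1 - C a * X := by
      rw [reverse, natDegree_X_sub_C, reflect_sub, reflect_one_X, reflect_C, pow_one]
    have hg : (PowerSeries.mk fun m => ((a ::ₘ s).map (· ^ m)).sum)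
        = (PowerSeries.mk fun m => a ^ m) + PowerSeries.mk fun m => (s.map (· ^ m)).sum := by
      ext; simp
    rw [hg, Multiset.map_cons, Multiset.prod_cons, reverse_mul_of_domain, hr,
      Polynomial.coe_mul, Multiset.card_cons]
    have hc : ((1 - C a * X : ℂ[X]) : PowerSeries ℂ) = 1 - PowerSeries.C a * PowerSeries.X := by
      simp
    have hD : PowerSeries.derivative ℂ (1 - PowerSeries.C a * PowerSeries.X) = - PowerSeries.C a := by
      simp [Derivation.leibniz]
    rw [hc, Derivation.leibniz, hD]
    simp only [smul_eq_mul]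
    push_cast
    linear_combination (1 - PowerSeries.C a * PowerSeries.X) * ih
      + (((s.map fun a => (X - C a : ℂ[X])).prod.reverse : ℂ[X]) : PowerSeries ℂ) * geom_aux a

/-- Newton's identities: `t R' = (deg p - S) R`, with `R` the reversal of `p` and `S` the generating
function of its power sums. -/
theorem reverse_mul_psGen (p : ℂ[X]) (hp : p.Monic) :
    PowerSeries.X * PowerSeries.derivative ℂ (p.reverse : PowerSeries ℂ)
      = ((p.natDegree : PowerSeries ℂ) - psGen p) * (p.reverse : PowerSeries ℂ) := by
  have hs := IsAlgClosed.splits p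
  have h := reverse_mul_psGen_prod p.roots
  have hprod : (p.roots.map fun a => (X - C a : ℂ[X])).prod = p :=
    (hs.eq_prod_roots_of_monic hp).symm
  rw [hprod, ← hs.natDegree_eq_card_roots] at h
  exact h

/-- Under the substitution `z = 1/t` the derivation `d/dz` becomes `-t² d/dt`. -/
theorem reflect_derivative (N : ℕ) (f : ℂ[X]) (hf : f.natDegree ≤ N) :
    reflect (N + 1) (derivative f) = X ^ 2 * ((N : ℂ[X]) * reflect N f - X * derivative (reflect N f)) := by
  refine Polynomial.induction_with_natDegree_le (fun f => reflect (N + 1) (derivative f)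
    = X ^ 2 * ((N : ℂ[X]) * reflect N f - X * derivative (reflect N f))) N (by simp)
    (fun k c _ hk => ?_) (fun f g _ _ ihf ihg => ?_) f hf
  · rw [reflect_C_mul_X_pow, revAt_le hk, derivative_C_mul_X_pow, reflect_C_mul_X_pow,
      revAt_le (by omega), derivative_C_mul_X_pow]
    obtain ⟨j, rfl⟩ := Nat.exists_eq_add_of_le hk
    rcases k with _ | k
    · rcases j with _ | j
      · simp
      · simp [pow_succ]; ring
    · rcases j with _ | j
      · have : k + 1 + 0 + 1 - (k + 1 - 1) = 2 := by omega
        rw [this]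
        simp
        ring
      · have e1 : k + 1 + (j + 1) + 1 - (k + 1 - 1) = j + 3 := by omega
        have e2 : k + 1 + (j + 1) - (k + 1) = j + 1 := by omega
        rw [e1, e2, Nat.add_sub_cancel]
        simp
        ring
  · rw [derivative_add, reflect_add, ihf, ihg, reflect_add, derivative_add]
    ring

/-- The differential–difference recurrence, multiplied by `t ^ (2 * d + 2)` and rewritten in
`t = 1/z`; `L` is the reflection of `p1'` at degree `d + 1`. -/
theorem reflect_rec {d : ℕ} {p0 p1 p2 : ℂ[X]} (n0 : p0 ≠ 0) (n2 : p2 ≠ 0) (hd1 : p1.natDegree = d)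
    (hd : p2.natDegree + p0.natDegree = 2 * d + 1)
    (h : p2 * p0 = X * p1 ^ 2 - 4 * (p1 * derivative (derivative p1) - (derivative p1) ^ 2)) 
    (L : ℂ[X]) (hL : L = X ^ 2 * ((d : ℂ[X]) * p1.reverse - X * derivative p1.reverse)) :
    X * (p2.reverse * p0.reverse) = X * p1.reverse ^ 2 - 4 * (p1.reverse * 
      (X ^ 2 * (((d + 1 : ℕ) : ℂ[X]) * L - X * derivative L)) - L ^ 2) := by
  have dd1 : (derivative p1).natDegree ≤ d + 1 := (natDegree_derivative_le _).trans (by omega)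
  have dd2 : (derivative (derivative p1)).natDegree ≤ d + 2 :=
    (natDegree_derivative_le _).trans (by omega)
  have r1 : reflect (d + 1) (derivative p1) = L := by
    rw [reflect_derivative d p1 hd1.le, hL, reverse, hd1]
  have r2 : reflect (d + 2) (derivative (derivative p1)) =
      X ^ 2 * (((d + 1 : ℕ) : ℂ[X]) * L - X * derivative L) := by
    rw [reflect_derivative (d + 1) _ dd1, r1]
  have hR : reflect d p1 = p1.reverse := by rw [reverse, hd1]
  have e := congrArg (reflect (2 * d + 2)) h
  have l1 : reflect (2 * d + 2) (p2 * p0) = X * (p2.reverse * p0.reverse) := by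
    rw [← reverse_mul_of_domain, reverse]
    have hn : (p2 * p0).natDegree = 2 * d + 1 := by rw [natDegree_mul n2 n0, hd]
    have := reflect_mul (1 : ℂ[X]) (p2 * p0) (F := 1) (G := 2 * d + 1) (by simp) hn.le
    rw [one_mul, reflect_one, pow_one] at this
    rw [hn, ← this]
    congr 1
    ring
  have l2 : reflect (2 * d + 2) (X * p1 ^ 2) = X * p1.reverse ^ 2 := by
    rw [show 2 * d + 2 = 2 + (d + d) by ring, reflect_mul _ _ (by simp)
      (by rw [sq]; exact natDegree_mul_le.trans (by omega)), sq, reflect_mul _ _ hd1.le hd1.le, hR]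
    have := reflect_monomial 2 1 (R := ℂ)
    rw [pow_one, revAt_le (by omega), pow_one] at this
    rw [this, sq]
  have l3 : reflect (2 * d + 2) (p1 * derivative (derivative p1)) = p1.reverse * 
      (X ^ 2 * (((d + 1 : ℕ) : ℂ[X]) * L - X * derivative L)) := by
    rw [show 2 * d + 2 = d + (d + 2) by ring, reflect_mul _ _ hd1.le dd2, hR, r2]
  have l4 : reflect (2 * d + 2) (derivative p1 ^ 2) = L ^ 2 := by
    rw [show 2 * d + 2 = (d + 1) + (d + 1) by ring, sq, reflect_mul _ _ dd1 dd1, r1, sq]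
  rw [← l1, ← l2, ← l3, ← l4, h]
  have : (4 : ℂ[X]) = C 4 := rfl
  rw [reflect_sub, this, reflect_C_mul, reflect_sub]

/-- The recurrence in terms of the generating functions `S_n` of the power sums: the logarithmic
derivative of `R_2 R_0 = R_1² G`. -/
theorem psGen_rec {p0 p1 p2 : ℂ[X]} (m0 : p0.Monic) (m1 : p1.Monic) (m2 : p2.Monic)
    (hd : p2.natDegree + p0.natDegree = 2 * p1.natDegree + 1)
    (h : p2 * p0 = X * p1 ^ 2 - 4 * (p1 * derivative (derivative p1) - (derivative p1) ^ 2)) 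
    (G : PowerSeries ℂ) (hG : G = 1 + 4 * PowerSeries.X ^ 3 *
      PowerSeries.derivative ℂ (PowerSeries.X * psGen p1)) :
    (psGen p2 + psGen p0 - 2 * psGen p1) * G = G - PowerSeries.X * PowerSeries.derivative ℂ G := by
  obtain ⟨L, hLdef⟩ : ∃ L : ℂ[X], L = X ^ 2 * ((p1.natDegree : ℂ[X]) * p1.reverse
    - X * Polynomial.derivative p1.reverse) := ⟨_, rfl⟩
  have e := congrArg (fun p : ℂ[X] => (p : PowerSeries ℂ)) (reflect_rec m0.ne_zero m2.ne_zero rfl hd h L hLdef)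
  have e0 := reverse_mul_psGen p0 m0
  have e1 := reverse_mul_psGen p1 m1
  have e2 := reverse_mul_psGen p2 m2
  have hcast (k : ℕ) : (((k : ℂ[X])) : PowerSeries ℂ) = k := by simpa using Polynomial.coe_C (k : ℂ)
  have h4 : ((4 : ℂ[X]) : PowerSeries ℂ) = 4 := by simpa using hcast 4
  have hR1ne : (p1.reverse : PowerSeries ℂ) ≠ 0 := by
    rw [Ne, Polynomial.coe_eq_zero_iff, reverse_eq_zero]; exact m1.ne_zero
  have hX : (PowerSeries.X : PowerSeries ℂ) ≠ 0 := PowerSeries.X_ne_zero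
  have hL : (L : PowerSeries ℂ)
      = PowerSeries.X ^ 2 * (psGen p1 * (p1.reverse : PowerSeries ℂ)) := by
    rw [hLdef]
    simp only [Polynomial.coe_mul, Polynomial.coe_sub, Polynomial.coe_pow, Polynomial.coe_X, hcast,
      ← PowerSeries.derivative_coe]
    rw [e1]; ring
  have hd' : (p2.natDegree : PowerSeries ℂ) + p0.natDegree = 2 * p1.natDegree + 1 := by
    exact_mod_cast congrArg (Nat.cast (R := PowerSeries ℂ)) hd
  simp only [Polynomial.coe_mul, Polynomial.coe_sub, Polynomial.coe_pow, Polynomial.coe_X, hcast, h4,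
      ← PowerSeries.derivative_coe, hL] at e
  generalize (p0.reverse : PowerSeries ℂ) = R0 at *
  generalize (p1.reverse : PowerSeries ℂ) = R1 at *
  generalize (p2.reverse : PowerSeries ℂ) = R2 at *
  generalize psGen p0 = S0 at *
  generalize psGen p1 = S1 at *
  generalize psGen p2 = S2 at *
  have hrec : R2 * R0 = R1 ^ 2 * G := by
    refine mul_left_cancel₀ hX ?_
    rw [e, hG]
    simp only [Derivation.leibniz, Derivation.leibniz_pow, PowerSeries.derivative_X, smul_eq_mul,
      nsmul_eq_mul]
    push_cast
    linear_combination (4 * R1 * PowerSeries.X ^ 4 * S1) * e1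
  -- Apply the derivation `t d/dt` to `R2 * R0 = R1 ^ 2 * G`, and cancel `R1 ^ 2`.
  have hD := congrArg (fun f => PowerSeries.X * PowerSeries.derivative ℂ f) hrec
  simp only [Derivation.leibniz, Derivation.leibniz_pow, smul_eq_mul, nsmul_eq_mul] at hD
  push_cast at hD
  refine mul_left_cancel₀ (pow_ne_zero 2 hR1ne) ?_
  linear_combination -hD + R0 * e2 + R2 * e0 - 2 * R1 * G * e1
    + (p2.natDegree - S2 + p0.natDegree - S0) * hrec + R1 ^ 2 * G * hd'

/-- Coefficientwise form of `T G = G - t G'` with `G = 1 + 4 t³ (t S)'`. -/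
theorem coeff_of_rec {S T H : PowerSeries ℂ} (hH : H = PowerSeries.derivative ℂ (PowerSeries.X * S))
    (h : T * (1 + 4 * PowerSeries.X ^ 3 * H) = (1 + 4 * PowerSeries.X ^ 3 * H)
      - PowerSeries.X * PowerSeries.derivative ℂ (1 + 4 * PowerSeries.X ^ 3 * H)) :
    PowerSeries.coeff 0 T = 1 ∧ PowerSeries.coeff 1 T = 0 ∧ PowerSeries.coeff 2 T = 0 ∧
    ∀ m : ℕ, PowerSeries.coeff (m + 3) T = - (4 * (m + 1) * (m + 2) * PowerSeries.coeff m S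
      + 4 * ∑ x ∈ Finset.HasAntidiagonal.antidiagonal m,
        ((x.1 + 1) * PowerSeries.coeff x.1 S) * PowerSeries.coeff x.2 T) := by
  have c4 : (4 : PowerSeries ℂ) = PowerSeries.C 4 := rfl
  -- Isolating `T` exposes the factor `X ^ 3` that makes the recursion well-founded.
  have hT : T = 1 - PowerSeries.X ^ 3 * (PowerSeries.C 8 * H
      + PowerSeries.C 4 * (PowerSeries.X * PowerSeries.derivative ℂ H)
      + PowerSeries.C 4 * (H * T)) := by
    have c8 : PowerSeries.C (8 : ℂ) = 8 := rfl
    rw [c4] at h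
    simp only [map_add, Derivation.leibniz, Derivation.leibniz_pow, PowerSeries.derivative_X,
      PowerSeries.derivative_C, Derivation.map_one_eq_zero, smul_eq_mul, nsmul_eq_mul] at h
    push_cast at h
    rw [c8]
    rw [← c4] at h ⊢
    linear_combination h
  have hcH (m : ℕ) : PowerSeries.coeff m H = (m + 1) * PowerSeries.coeff m S := by
    rw [hH, PowerSeries.coeff_derivative, PowerSeries.coeff_succ_X_mul]; ring
  have hcX (m : ℕ) : PowerSeries.coeff m (PowerSeries.X * PowerSeries.derivative ℂ H)
      = m * PowerSeries.coeff m H := by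
    cases m with
    | zero => simp
    | succ m => rw [PowerSeries.coeff_succ_X_mul, PowerSeries.coeff_derivative]; push_cast; ring
  refine ⟨?_, ?_, ?_, fun m => ?_⟩
  · rw [hT, map_sub, PowerSeries.coeff_X_pow_mul']; simp
  · rw [hT, map_sub, PowerSeries.coeff_X_pow_mul']; simp [PowerSeries.coeff_one]
  · rw [hT, map_sub, PowerSeries.coeff_X_pow_mul']; simp [PowerSeries.coeff_one]
  · conv_lhs => rw [hT]
    rw [map_sub, PowerSeries.coeff_X_pow_mul, map_add, map_add, PowerSeries.coeff_C_mul,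
      PowerSeries.coeff_C_mul, PowerSeries.coeff_C_mul, hcX, PowerSeries.coeff_mul,
      PowerSeries.coeff_one, if_neg (by omega)]
    simp only [hcH]
    ring

/-! ### The Yablonskii–Vorob'ev polynomials -/

/-- Each `Q n` is monic, and the degrees satisfy the recursion of the triangular numbers, since
`X * Q (n + 1) ^ 2` dominates the right-hand side of the recurrence. -/
theorem monic_and_degree (Q : ℕ → Polynomial ℚ)
    (hQ0 : Q 0 = 1) (hQ1 : Q 1 = X)
    (hQrec : ∀ n : ℕ, Q (n + 2) * Q n =
      X * (Q (n + 1)) ^ 2 -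
        4 * (Q (n + 1) * derivative (derivative (Q (n + 1))) -
              (derivative (Q (n + 1))) ^ 2)) (n : ℕ) :
    (Q n).Monic ∧ (Q (n + 2)).natDegree + (Q n).natDegree = 2 * (Q (n + 1)).natDegree + 1 := by
  have step : ∀ n, (Q n).Monic → (Q (n + 1)).Monic → (Q (n + 2)).Monic ∧
      (Q (n + 2)).natDegree + (Q n).natDegree = 2 * (Q (n + 1)).natDegree + 1 := by
    intro n h0 h1
    set p := Q (n + 1) with hp
    have hm : (X * p ^ 2).Monic := monic_X.mul (h1.pow 2)
    have hmd : (X * p ^ 2).natDegree = 2 * p.natDegree + 1 := by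
      rw [natDegree_X_mul (h1.pow 2).ne_zero, h1.natDegree_pow]
    have hlow : (4 * (p * derivative (derivative p) - (derivative p) ^ 2)).natDegree
        < (X * p ^ 2).natDegree := by
      rw [hmd]
      have c4 : (4 : ℚ[X]) = C 4 := rfl
      have e1 := natDegree_derivative_le p
      have e2 := natDegree_derivative_le (derivative p)
      rw [c4]
      refine Nat.lt_succ_of_le ((natDegree_C_mul_le _ _).trans ((natDegree_sub_le _ _).trans
        (max_le (natDegree_mul_le.trans ?_) (natDegree_pow_le.trans ?_))))
      · omega
      · omega
    have hdeg := degree_lt_degree hlow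
    have hmon : (Q (n + 2) * Q n).Monic := by rw [hQrec]; exact hm.sub_of_left hdeg
    have h2 := h0.of_mul_monic_right hmon
    refine ⟨h2, ?_⟩
    rw [← h2.natDegree_mul h0, hQrec, natDegree_sub_eq_left_of_natDegree_lt hlow, hmd]
  have hmon : ∀ n, (Q n).Monic := fun n => by
    induction n using Nat.twoStepInduction with
    | zero => rw [hQ0]; exact monic_one
    | one => rw [hQ1]; exact monic_X
    | more n h0 h1 => exact (step n h0 h1).1
  exact ⟨hmon n, (step n (hmon n) (hmon (n + 1))).2⟩

/-- For every `l ≥ 1` there is a polynomial `P` with rational coefficients of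
degree exactly `2(l+1)` such that `s_{n,3l} = P(n)` for all `n ≥ 2`. -/
theorem powerSum_is_polynomial_in_n
    (Q : ℕ → Polynomial ℚ)
    (hQ0 : Q 0 = 1) (hQ1 : Q 1 = X)
    (hQrec : ∀ n : ℕ, Q (n + 2) * Q n =
      X * (Q (n + 1)) ^ 2 -
        4 * (Q (n + 1) * derivative (derivative (Q (n + 1))) -
              (derivative (Q (n + 1))) ^ 2)) :
    ∀ l : ℕ, 1 ≤ l → ∃ P : Polynomial ℚ,
      P.degree = ((2 * (l + 1) : ℕ) : WithBot ℕ) ∧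
      ∀ n : ℕ, 2 ≤ n → powerSum Q n (3 * l) = ((P.eval (n : ℚ) : ℚ) : ℂ) := by
  intro l _
  have hc : ∀ n m, PowerSeries.coeff m (psGen ((Q n).map (algebraMap ℚ ℂ))) = powerSum Q n m :=
    fun n m => by rw [psGen, PowerSeries.coeff_mk, powerSum]
  have hrec : ∀ n, _ := fun n => coeff_of_rec (H := _) rfl (psGen_rec
    (p0 := (Q n).map (algebraMap ℚ ℂ)) (p1 := (Q (n + 1)).map (algebraMap ℚ ℂ))
    (p2 := (Q (n + 2)).map (algebraMap ℚ ℂ))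
    ((monic_and_degree Q hQ0 hQ1 hQrec n).1.map _)
    ((monic_and_degree Q hQ0 hQ1 hQrec (n + 1)).1.map _)
    ((monic_and_degree Q hQ0 hQ1 hQrec (n + 2)).1.map _)
    (by simpa only [natDegree_map] using (monic_and_degree Q hQ0 hQ1 hQrec n).2)
    (by simpa [derivative_map] using congrArg (Polynomial.map (algebraMap ℚ ℂ)) (hQrec n)) _ rfl)
  have c2 : (2 : PowerSeries ℂ) = PowerSeries.C 2 := rfl
  simp only [c2, map_sub, map_add, PowerSeries.coeff_C_mul, hc] at hrec
  have hsgn (m : ℕ) : ((-1 : ℂ) ^ m) * (-1) ^ m = 1 := by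
    rw [← mul_pow]; simp
  obtain ⟨P, D, hP, -, hG, -⟩ := exists_good_of_rec (fun m n => (-1) ^ m * powerSum Q n m)
    (fun m => by simp [powerSum, hQ0])
    (fun m => by rcases m with _ | m <;> simp [powerSum, hQ1])
    _ (fun m n => rfl)
    (fun n => by simpa using (hrec n).1)
    (fun n => by linear_combination -(hrec n).2.1)
    (fun n => by linear_combination (hrec n).2.2.1)
    (fun m n => by
      have h3 := (hrec n).2.2.2 m
      have : ∑ x ∈ Finset.HasAntidiagonal.antidiagonal m, ((x.1 : ℂ) + 1)
          * ((-1) ^ x.1 * powerSum Q (n + 1) x.1)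
          * ((-1) ^ x.2 * powerSum Q (n + 2) x.2 + (-1) ^ x.2 * powerSum Q n x.2
            - 2 * ((-1) ^ x.2 * powerSum Q (n + 1) x.2))
          = (-1) ^ m * ∑ x ∈ Finset.HasAntidiagonal.antidiagonal m, ((x.1 : ℂ) + 1)
            * powerSum Q (n + 1) x.1
            * (powerSum Q (n + 2) x.2 + powerSum Q n x.2 - 2 * powerSum Q (n + 1) x.2) := by
        rw [Finset.mul_sum]
        refine Finset.sum_congr rfl fun x hx => ?_
        rw [← Finset.HasAntidiagonal.mem_antidiagonal.1 hx, pow_add]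
        ring
      rw [this]
      linear_combination -(-1) ^ m * h3) (3 * l)
  refine ⟨C ((-1) ^ (3 * l)) * P, ?_, fun n _ => ?_⟩
  · rw [degree_C_mul (pow_ne_zero _ (by norm_num)), (hG l rfl).1.degree_eq]
    rfl
  · rw [eval_C_mul]
    push_cast
    rw [← hP, ← mul_assoc, hsgn, one_mul]
end

section
/- For every integer l ≥ 1 there exists a polynomial R_l with rational coefficients of degree exactly 4l such that A_{n,3l} = R_l(n) for all integers n ≥ 0. -/
open Polynomial

/-- `A_{n,k}`, the coefficient of `z^(n(n+1)/2 - k)` in `Q n`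
(equal to `0` for `k > n(n+1)/2`). -/
def coeffA (Q : ℕ → Polynomial ℚ) (n k : ℕ) : ℚ :=
  if k ≤ n * (n + 1) / 2 then (Q n).coeff (n * (n + 1) / 2 - k) else 0

/-!
Write `d n = n (n + 1) / 2` and `P n = ∑ A_{n,k} s ^ k`, so that `P n` is the reversal of `Q n`
(`s = 1 / z`). In the variable `s` the recurrence for the monic polynomials `Q n` becomes
`P (n+2) P n = P (n+1) ^ 2 - 4 s ^ 3 (⋯)`, where `(⋯)` is bilinear in `P (n+1)` and its Euler
derivatives (`reflect_rec`). Comparing coefficients of `s ^ k` and symmetrizing gives a recurrence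
(`coeffA_rec`) which shows, by strong induction on `k`, that `A_{n,k} = 0` unless `3 ∣ k`. For
`a_l(n) = A_{n,3l}` it reads (`coeffA_three_rec`)

  `∑_{i+j=l+1} (a_i(n+2) a_j(n) + a_i(n) a_j(n+2) - 2 a_i(n+1) a_j(n+1))`
  `  = 8 ∑_{i+j=l} (d(n+1) - 9 (i-j)² / 2 - 3 (i+j) / 2) a_i(n+1) a_j(n+1)`.

The two terms containing the index `l + 1` are both the second difference of `a_{l+1}`, since
`a_0 = 1`. Everything else is, inductively, a polynomial in `n`; moreover the bilinear second
difference lowers degrees by two (`IsPolyOf.bilin`), so the second difference of `a_{l+1}` has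
degree at most `4l + 2` and `a_{l+1}` has degree at most `4(l+1)`.

The degree is exact because the coefficient `c_l` of `n ^ (4l)` in `a_l` obeys the induced
recurrence, which is the coefficientwise form of a differential equation satisfied by
`exp (y / 6)` (`leadC_identity`); hence `c_l = 1 / (6 ^ l l!) ≠ 0`.
-/

/-! ### Sequences that are polynomial in `n` -/

/-- `f` is given by a rational polynomial of degree at most `m` whose coefficient in degree `m`
is `c` (possibly `0`). -/
def IsPolyOf (f : ℕ → ℚ) (m : ℕ) (c : ℚ) : Prop :=
  ∃ R : ℚ[X], R.natDegree ≤ m ∧ R.coeff m = c ∧ ∀ n : ℕ, f n = R.eval (n : ℚ)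

namespace IsPolyOf

theorem congr {f g : ℕ → ℚ} {m m' : ℕ} {c c' : ℚ} (hf : IsPolyOf f m c)
    (h : ∀ n, g n = f n) (hm : m' = m) (hc : c' = c) : IsPolyOf g m' c' := by
  obtain rfl : g = f := funext h
  subst hm hc
  exact hf

theorem add {f g : ℕ → ℚ} {m : ℕ} {c e : ℚ} (hf : IsPolyOf f m c) (hg : IsPolyOf g m e) :
    IsPolyOf (fun n => f n + g n) m (c + e) := by
  obtain ⟨R, h1, rfl, h3⟩ := hf
  obtain ⟨S, k1, rfl, k3⟩ := hg
  exact ⟨R + S, natDegree_add_le_of_degree_le h1 k1, by simp, fun n => by simp [h3, k3]⟩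

theorem mul {f g : ℕ → ℚ} {m k : ℕ} {c e : ℚ} (hf : IsPolyOf f m c) (hg : IsPolyOf g k e) :
    IsPolyOf (fun n => f n * g n) (m + k) (c * e) := by
  obtain ⟨R, h1, rfl, h3⟩ := hf
  obtain ⟨S, k1, rfl, k3⟩ := hg
  exact ⟨R * S, natDegree_mul_le_of_le h1 k1, coeff_mul_add_eq_of_natDegree_le h1 k1,
    fun n => by simp [h3, k3]⟩

theorem const (c : ℚ) : IsPolyOf (fun _ => c) 0 c :=
  ⟨C c, by simp, by simp, fun n => by simp⟩

theorem smul {f : ℕ → ℚ} {m : ℕ} {c : ℚ} (a : ℚ) (hf : IsPolyOf f m c) :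
    IsPolyOf (fun n => a * f n) m (a * c) :=
  ((const a).mul hf).congr (fun _ => rfl) (by simp) rfl

/-- A polynomial sequence may be regarded as one of larger degree with vanishing top
coefficient. -/
theorem mono {f : ℕ → ℚ} {m k : ℕ} {c : ℚ} (hf : IsPolyOf f m c) (h : m < k) :
    IsPolyOf f k 0 := by
  obtain ⟨R, h1, -, h3⟩ := hf
  exact ⟨R, by omega, coeff_eq_zero_of_natDegree_lt (by omega), h3⟩

theorem sum {ι : Type*} (s : Finset ι) {f : ι → ℕ → ℚ} {m : ℕ} {c : ι → ℚ}
    (h : ∀ i ∈ s, IsPolyOf (f i) m (c i)) :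
    IsPolyOf (fun n => ∑ i ∈ s, f i n) m (∑ i ∈ s, c i) := by
  classical
  induction s using Finset.induction_on with
  | empty => exact ⟨0, by simp, by simp, fun n => by simp⟩
  | insert a s ha ih =>
    simp only [Finset.sum_insert ha]
    exact (h a (by simp)).add (ih fun i hi => h i (by simp [hi]))

theorem pow_id (m : ℕ) : IsPolyOf (fun n => (n : ℚ) ^ m) m 1 :=
  ⟨X ^ m, by simp, by simp, fun n => by simp⟩

theorem diff {f : ℕ → ℚ} {m : ℕ} {c : ℚ} (hf : IsPolyOf f (m + 1) c) :
    IsPolyOf (fun n => f (n + 1) - f n) m ((m + 1) * c) := by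
  obtain ⟨R, h1, rfl, h3⟩ := hf
  have hz : ∀ k, m + 1 < k → R.coeff k = 0 := fun k hk =>
    coeff_eq_zero_of_natDegree_lt (by omega)
  -- Above degree `m - 1`, only the first two terms of the Taylor expansion survive.
  have key : ∀ k, m ≤ k → (taylor 1 R).coeff k = R.coeff k + (k + 1) * R.coeff (k + 1) := by
    intro k hk
    rw [taylor_coeff, eval_eq_sum_range' (n := 2)]
    · simp [Finset.sum_range_succ, hasseDeriv_coeff, add_comm 1 k]
    · have := natDegree_hasseDeriv_le R k
      omega
  refine ⟨taylor 1 R - R, ?_, ?_, fun n => ?_⟩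
  · rw [natDegree_le_iff_coeff_eq_zero]
    intro k hk
    simp [key k hk.le, hz (k + 1) (by omega)]
  · simp [key m le_rfl]
  · simp [h3, taylor_eval]

theorem shift {f : ℕ → ℚ} {m : ℕ} {c : ℚ} (hf : IsPolyOf f m c) :
    IsPolyOf (fun n => f (n + 1)) m c := by
  obtain ⟨R, h1, rfl, h3⟩ := hf
  have h : IsPolyOf f (m + 1) 0 := mono ⟨R, h1, rfl, h3⟩ (by omega)
  exact (h.diff.add ⟨R, h1, rfl, h3⟩).congr (fun n => by ring) rfl (by ring)

/-- Discrete integration: converse to `IsPolyOf.diff`. -/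
theorem of_diff {m : ℕ} : ∀ {f : ℕ → ℚ} {c : ℚ}, IsPolyOf (fun n => f (n + 1) - f n) m c →
    IsPolyOf f (m + 1) (c / (m + 1)) := by
  induction m with
  | zero =>
    intro f c ⟨R, h1, h2, h3⟩
    rw [eq_C_of_natDegree_le_zero h1, h2] at h3
    have h : ∀ n : ℕ, f n = f 0 + c * n := by
      intro n
      induction n with
      | zero => simp
      | succ n ih =>
        have := h3 n
        simp only [eval_C] at this
        push_cast
        linarith
    exact (((const (f 0)).mono (k := 1) (by omega)).add ((pow_id 1).smul c)).congr
      (fun n => by rw [h n]; ring) rfl (by simp)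
  | succ m ih =>
    intro f c hf
    -- Subtracting the expected leading term lowers the degree of the difference.
    have hp := (pow_id (m + 2)).smul (-(c / (m + 2)))
    obtain ⟨S, s1, s2, s3⟩ := hf.add hp.diff
    have s2' : S.coeff (m + 1) = 0 := by
      rw [s2]
      push_cast
      field_simp
      ring
    have s1' : S.natDegree ≤ m := by
      rw [natDegree_le_iff_coeff_eq_zero]
      intro k hk
      rcases Nat.lt_or_ge (m + 1) k with h | h
      · exact coeff_eq_zero_of_natDegree_lt (by omega)
      · rw [show k = m + 1 by omega, s2']
    have hg : IsPolyOf (fun n => f n + -(c / (m + 2)) * (n : ℚ) ^ (m + 2)) (m + 1) _ :=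
      ih ⟨S, s1', rfl, fun n => by rw [← s3 n]; ring⟩
    exact ((hg.mono (k := m + 2) (by omega)).add ((pow_id (m + 2)).smul (c / (m + 2)))).congr
      (fun n => by ring) rfl (by push_cast; ring)

theorem of_diff_two {m : ℕ} {f : ℕ → ℚ} {c : ℚ}
    (h : IsPolyOf (fun n => f (n + 2) - 2 * f (n + 1) + f n) m c) :
    IsPolyOf f (m + 2) (c / ((m + 1) * (m + 2))) := by
  have h1 : IsPolyOf (fun n => f (n + 1) - f n) (m + 1) (c / (m + 1)) :=
    of_diff (h.congr (fun n => by ring) rfl rfl)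
  refine (of_diff h1).congr (fun _ => rfl) rfl ?_
  push_cast
  field_simp
  ring

/-- The bilinear second difference lowers the degree by two, because it equals
`Δ²f · g + f · Δ²g - 2 Δf · Δg`. -/
theorem bilin {f g : ℕ → ℚ} {p q : ℕ} {c e : ℚ}
    (hf : IsPolyOf f (p + 2) c) (hg : IsPolyOf g (q + 2) e) :
    IsPolyOf (fun n => f (n + 2) * g n + f n * g (n + 2) - 2 * (f (n + 1) * g (n + 1)))
      (p + q + 2) (c * e * (((p : ℚ) - q) ^ 2 - (p + q + 4))) := by
  have a1 := (hf.diff.diff.mul hg).congr (m' := p + q + 2) (fun _ => rfl) (by ring) rfl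
  have a2 := (hf.mul hg.diff.diff).congr (m' := p + q + 2) (fun _ => rfl) (by ring) rfl
  have a3 := ((hf.diff.mul hg.diff).smul (-2)).congr (m' := p + q + 2) (fun _ => rfl)
    (by ring) rfl
  refine ((a1.add a2).add a3).congr (fun n => ?_) rfl ?_
  · ring
  · push_cast
    ring

end IsPolyOf

open Finset.HasAntidiagonal (antidiagonal mem_antidiagonal)

/-! ### The recurrence for the coefficients -/

theorem triangle_succ (n : ℕ) :
    (n + 1) * (n + 1 + 1) / 2 = n * (n + 1) / 2 + (n + 1) := by
  rw [show (n + 1) * (n + 1 + 1) = n * (n + 1) + (n + 1) * 2 by ring,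
    Nat.add_mul_div_right _ _ (by norm_num)]

theorem triangle_cast (n : ℕ) : ((n * (n + 1) / 2 : ℕ) : ℚ) = n * (n + 1) / 2 := by
  induction n with
  | zero => simp
  | succ n ih =>
    rw [triangle_succ]
    push_cast [ih]
    ring

theorem natDegree_X_mul_derivative_le (q : ℚ[X]) :
    (X * derivative q).natDegree ≤ q.natDegree := by
  rw [natDegree_le_iff_coeff_eq_zero]
  rintro (_ | k) hk
  · simp
  · simp [coeff_X_mul, coeff_derivative, coeff_eq_zero_of_natDegree_lt hk]

theorem natDegree_X_sq_mul_derivative_le (q : ℚ[X]) :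
    (X ^ 2 * derivative (derivative q)).natDegree ≤ q.natDegree := by
  rw [natDegree_le_iff_coeff_eq_zero]
  rintro (_ | _ | k) hk
  · simp
  · simp [pow_two, mul_assoc, coeff_X_mul]
  · have : (X ^ 2 * derivative (derivative q)).coeff (k + 2) = _ :=
      coeff_X_pow_mul (derivative (derivative q)) 2 k
    rw [this]
    simp [coeff_derivative, coeff_eq_zero_of_natDegree_lt hk]

section YV

variable {Q : ℕ → ℚ[X]}

theorem monic_and_natDegree (hQ0 : Q 0 = 1) (hQ1 : Q 1 = X)
    (hQrec : ∀ n : ℕ, Q (n + 2) * Q n =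
      X * (Q (n + 1)) ^ 2 -
        4 * (Q (n + 1) * derivative (derivative (Q (n + 1))) -
              (derivative (Q (n + 1))) ^ 2)) (n : ℕ) :
    ((Q n).Monic ∧ (Q n).natDegree = n * (n + 1) / 2) ∧
      (Q (n + 1)).Monic ∧ (Q (n + 1)).natDegree = (n + 1) * (n + 1 + 1) / 2 := by
  induction n with
  | zero => simp [hQ0, hQ1, monic_X]
  | succ n ih =>
    obtain ⟨⟨m0, d0⟩, m1, d1⟩ := ih
    refine ⟨⟨m1, d1⟩, ?_⟩
    have hX : (X * (Q (n + 1)) ^ 2).Monic := monic_X.mul (m1.pow 2)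
    have hXd : (X * (Q (n + 1)) ^ 2).natDegree = 2 * (Q (n + 1)).natDegree + 1 := by
      rw [natDegree_X_mul (m1.pow 2).ne_zero, m1.natDegree_pow]
    have hlt : (4 * (Q (n + 1) * derivative (derivative (Q (n + 1))) -
              (derivative (Q (n + 1))) ^ 2)).natDegree < (X * (Q (n + 1)) ^ 2).natDegree := by
      rw [hXd, Nat.lt_succ_iff]
      have e1 := natDegree_derivative_le (Q (n + 1))
      have e2 := natDegree_derivative_le (derivative (Q (n + 1)))
      have e4 : (4 : ℚ[X]).natDegree ≤ 0 := by simp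
      have e5 : (Q (n + 1) * derivative (derivative (Q (n + 1)))).natDegree ≤
          2 * (Q (n + 1)).natDegree := natDegree_mul_le.trans (by omega)
      have e6 : ((derivative (Q (n + 1))) ^ 2).natDegree ≤ 2 * (Q (n + 1)).natDegree :=
        natDegree_pow_le.trans (by omega)
      exact (natDegree_mul_le_of_le e4 (natDegree_sub_le_of_le e5 e6)).trans (by simp)
    have hlt' := degree_lt_degree hlt
    have hM : (Q (n + 2) * Q n).Monic := by
      rw [hQrec]
      exact hX.sub_of_left hlt'
    have hD : (Q (n + 2) * Q n).natDegree = 2 * (Q (n + 1)).natDegree + 1 := by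
      rw [hQrec, natDegree_sub_eq_left_of_natDegree_lt hlt, hXd]
    have m2 : (Q (n + 2)).Monic := m0.of_mul_monic_right hM
    refine ⟨m2, ?_⟩
    rw [m2.natDegree_mul m0, d0, d1] at hD
    have t1 := triangle_succ n
    have t2 := triangle_succ (n + 1)
    change (Q (n + 2)).natDegree = _
    omega

theorem coeffA_eq_coeff_reflect {n : ℕ} (h : (Q n).natDegree = n * (n + 1) / 2) (k : ℕ) :
    coeffA Q n k = (reflect (n * (n + 1) / 2) (Q n)).coeff k := by
  unfold coeffA
  rw [coeff_reflect]
  split_ifs with hk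
  · rw [revAt_le hk]
  · rw [revAt_eq_self_of_lt (by omega), coeff_eq_zero_of_natDegree_lt (by omega)]

theorem coeff_reflect_X_mul_derivative {q : ℚ[X]} {N : ℕ} (h : q.natDegree ≤ N) (k : ℕ) :
    (reflect N (X * derivative q)).coeff k = ((N : ℚ) - k) * (reflect N q).coeff k := by
  rw [coeff_reflect, coeff_reflect]
  rcases le_or_gt k N with hk | hk
  · rw [revAt_le hk, ← Nat.cast_sub hk]
    rcases N - k with _ | j
    · simp
    · simp [coeff_X_mul, coeff_derivative, mul_comm]
  · rw [revAt_eq_self_of_lt hk, coeff_eq_zero_of_natDegree_lt (p := q) (by omega),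
      coeff_eq_zero_of_natDegree_lt ((natDegree_X_mul_derivative_le q).trans_lt (by omega)),
      mul_zero]

theorem coeff_reflect_X_sq_mul_derivative {q : ℚ[X]} {N : ℕ} (h : q.natDegree ≤ N) (k : ℕ) :
    (reflect N (X ^ 2 * derivative (derivative q))).coeff k =
      ((N : ℚ) - k) * ((N : ℚ) - k - 1) * (reflect N q).coeff k := by
  have e : X ^ 2 * derivative (derivative q) =
      X * derivative (X * derivative q) - X * derivative q := by
    simp [derivative_mul]
    ring
  rw [e, reflect_sub, coeff_sub,
    coeff_reflect_X_mul_derivative ((natDegree_X_mul_derivative_le q).trans h),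
    coeff_reflect_X_mul_derivative h]
  ring

/-- The recurrence in the variable `s = 1/z`, for the reversed polynomials
`P n = s ^ (n(n+1)/2) * Q n (1/s)`. -/
theorem reflect_rec_s6 (hQ0 : Q 0 = 1) (hQ1 : Q 1 = X)
    (hQrec : ∀ n : ℕ, Q (n + 2) * Q n =
      X * (Q (n + 1)) ^ 2 -
        4 * (Q (n + 1) * derivative (derivative (Q (n + 1))) -
              (derivative (Q (n + 1))) ^ 2)) (n d0 d1 d2 : ℕ)
    (h0 : d0 = n * (n + 1) / 2) (h1 : d1 = (n + 1) * (n + 1 + 1) / 2)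
    (h2 : d2 = (n + 2) * (n + 2 + 1) / 2) :
    reflect d2 (Q (n + 2)) * reflect d0 (Q n) = reflect d1 (Q (n + 1)) * reflect d1 (Q (n + 1)) -
      X ^ 3 * (C 4 * (reflect d1 (Q (n + 1)) *
          reflect d1 (X ^ 2 * derivative (derivative (Q (n + 1)))) -
        reflect d1 (X * derivative (Q (n + 1))) * reflect d1 (X * derivative (Q (n + 1))))) := by
  have g0 : (Q n).natDegree ≤ d0 := by rw [h0, (monic_and_natDegree hQ0 hQ1 hQrec n).1.2]
  have g1 : (Q (n + 1)).natDegree ≤ d1 := by rw [h1, (monic_and_natDegree hQ0 hQ1 hQrec n).2.2]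
  have g2 : (Q (n + 2)).natDegree ≤ d2 := by
    rw [h2, (monic_and_natDegree hQ0 hQ1 hQrec (n + 2)).1.2]
  have hd : d2 + d0 = d1 + d1 + 1 := by
    have t1 := triangle_succ n
    have t2 := triangle_succ (n + 1)
    have h2' : d2 = (n + 1 + 1) * (n + 1 + 1 + 1) / 2 := h2
    omega
  have u1 := (natDegree_X_mul_derivative_le (Q (n + 1))).trans g1
  have u2 := (natDegree_X_sq_mul_derivative_le (Q (n + 1))).trans g1
  -- Multiplying by `z ^ 2` makes every factor a polynomial in `z` and the Euler operator.
  have key : X ^ 2 * (Q (n + 2) * Q n) = X ^ 3 * (Q (n + 1) * Q (n + 1)) -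
      1 * (C 4 * (Q (n + 1) * (X ^ 2 * derivative (derivative (Q (n + 1)))) -
        (X * derivative (Q (n + 1))) * (X * derivative (Q (n + 1))))) := by
    rw [hQrec, show (C 4 : ℚ[X]) = 4 from rfl]
    ring
  have hw : (C 4 * (Q (n + 1) * (X ^ 2 * derivative (derivative (Q (n + 1)))) -
      (X * derivative (Q (n + 1))) * (X * derivative (Q (n + 1))))).natDegree ≤ d1 + d1 :=
    (natDegree_C_mul_le _ _).trans ((natDegree_sub_le_of_le
      (natDegree_mul_le_of_le g1 u2) (natDegree_mul_le_of_le u1 u1)).trans (max_self _).le)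
  have hr := congrArg (reflect (2 + (d2 + d0))) key
  rw [reflect_mul _ _ (by simp) (natDegree_mul_le_of_le g2 g0), reflect_mul _ _ g2 g0,
    show 2 + (d2 + d0) = 3 + (d1 + d1) by omega, reflect_sub,
    reflect_mul _ _ (by simp) (natDegree_mul_le_of_le g1 g1), reflect_mul _ _ g1 g1,
    reflect_mul _ _ (by simp) hw,
    reflect_C_mul, reflect_sub, reflect_mul _ _ g1 u2, reflect_mul _ _ u1 u1] at hr
  have r2 : reflect 2 (X ^ 2 : ℚ[X]) = 1 := by simp [reflect_monomial, revAt_le]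
  have r3 : reflect 3 (X ^ 3 : ℚ[X]) = 1 := by simp [reflect_monomial, revAt_le]
  have r1 : reflect 3 (1 : ℚ[X]) = X ^ 3 := by simp [reflect_one]
  rw [r2, r3, r1, one_mul, one_mul] at hr
  exact hr

theorem coeffA_zero (hQ0 : Q 0 = 1) (hQ1 : Q 1 = X)
    (hQrec : ∀ n : ℕ, Q (n + 2) * Q n =
      X * (Q (n + 1)) ^ 2 -
        4 * (Q (n + 1) * derivative (derivative (Q (n + 1))) -
              (derivative (Q (n + 1))) ^ 2)) (n : ℕ) : coeffA Q n 0 = 1 := by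
  obtain ⟨hm, hd⟩ := (monic_and_natDegree hQ0 hQ1 hQrec n).1
  simp only [coeffA, Nat.zero_le, if_true, Nat.sub_zero]
  rw [← hd]
  exact hm.coeff_natDegree

/-- The recurrence for the `A_{n,k}`, symmetrized in the two convolution indices. -/
theorem coeffA_rec (hQ0 : Q 0 = 1) (hQ1 : Q 1 = X)
    (hQrec : ∀ n : ℕ, Q (n + 2) * Q n =
      X * (Q (n + 1)) ^ 2 -
        4 * (Q (n + 1) * derivative (derivative (Q (n + 1))) -
              (derivative (Q (n + 1))) ^ 2)) (n k : ℕ) :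
    ∑ p ∈ antidiagonal k, (coeffA Q (n + 2) p.1 * coeffA Q n p.2 +
        coeffA Q n p.1 * coeffA Q (n + 2) p.2 -
        2 * (coeffA Q (n + 1) p.1 * coeffA Q (n + 1) p.2)) =
      if 3 ≤ k then 8 * ∑ p ∈ antidiagonal (k - 3),
        (((n : ℚ) + 1) * (n + 2) / 2 - ((p.1 : ℚ) - p.2) ^ 2 / 2 - ((p.1 : ℚ) + p.2) / 2) *
          (coeffA Q (n + 1) p.1 * coeffA Q (n + 1) p.2)
      else 0 := by
  have hdeg := fun m => (monic_and_natDegree hQ0 hQ1 hQrec m).1.2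
  have h := congrArg (fun q => coeff q k)
    (reflect_rec_s6 hQ0 hQ1 hQrec n _ _ _ rfl rfl rfl)
  simp only [coeff_sub, coeff_X_pow_mul', coeff_C_mul] at h
  simp only [coeff_mul,
    coeff_reflect_X_mul_derivative (hdeg (n + 1)).le,
    coeff_reflect_X_sq_mul_derivative (hdeg (n + 1)).le,
    ← coeffA_eq_coeff_reflect (hdeg _)] at h
  have hc : (((n + 1) * (n + 1 + 1) / 2 : ℕ) : ℚ) = ((n : ℚ) + 1) * (n + 2) / 2 := by
    rw [triangle_cast]
    push_cast
    ring
  rw [hc] at h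
  have hs := Finset.Nat.sum_antidiagonal_swap (n := k)
    (f := fun p => coeffA Q (n + 2) p.1 * coeffA Q n p.2)
  simp only [Prod.fst_swap, Prod.snd_swap] at hs
  have hl : ∑ p ∈ antidiagonal k, (coeffA Q (n + 2) p.1 * coeffA Q n p.2 +
        coeffA Q n p.1 * coeffA Q (n + 2) p.2 -
        2 * (coeffA Q (n + 1) p.1 * coeffA Q (n + 1) p.2)) =
      2 * (∑ p ∈ antidiagonal k, coeffA Q (n + 2) p.1 * coeffA Q n p.2 -
        ∑ p ∈ antidiagonal k, coeffA Q (n + 1) p.1 * coeffA Q (n + 1) p.2) := by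
    rw [Finset.sum_sub_distrib, Finset.sum_add_distrib, ← Finset.mul_sum]
    have : ∑ p ∈ antidiagonal k, coeffA Q n p.1 * coeffA Q (n + 2) p.2 =
        ∑ p ∈ antidiagonal k, coeffA Q (n + 2) p.1 * coeffA Q n p.2 := by
      rw [← hs]
      exact Finset.sum_congr rfl fun p _ => mul_comm _ _
    rw [this]
    ring
  rw [hl, h]
  split_ifs with hk
  · rw [← Finset.sum_sub_distrib]
    set D : ℚ := ((n : ℚ) + 1) * (n + 2) / 2
    have e : ∀ A S T : ℚ, S + S = -2 * T → 2 * (A - 4 * S - A) = 8 * T := by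
      intro A S T hT
      linarith
    apply e
    conv_lhs => enter [2]; rw [← Finset.Nat.sum_antidiagonal_swap]
    rw [← Finset.sum_add_distrib, Finset.mul_sum]
    refine Finset.sum_congr rfl fun p _ => ?_
    simp only [Prod.fst_swap, Prod.snd_swap]
    ring
  · ring

end YV

theorem sum_antidiagonal_succ_eq_ends_add {M : Type*} [AddCommMonoid M] (l : ℕ)
    (F : ℕ × ℕ → M) :
    ∑ p ∈ antidiagonal (l + 1), F p = F (0, l + 1) + (F (l + 1, 0) +
      ∑ p ∈ ((antidiagonal (l + 1)).erase (0, l + 1)).erase (l + 1, 0), F p) := by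
  rw [Finset.add_sum_erase _ _ (by simp), Finset.add_sum_erase _ _ (by simp)]

theorem exists_of_mem_interior {l : ℕ} {p : ℕ × ℕ}
    (hp : p ∈ ((antidiagonal (l + 1)).erase (0, l + 1)).erase (l + 1, 0)) :
    ∃ i j, p = (i + 1, j + 1) ∧ i + j + 1 = l := by
  obtain ⟨_ | i, _ | j⟩ := p
  · simp at hp
  · simp at hp
  · simp at hp
  · simp at hp
    exact ⟨i, j, rfl, by omega⟩

section Vanishing

variable {Q : ℕ → ℚ[X]}

/-- `Q n` only involves powers of `z` in a single residue class modulo `3`. -/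
theorem coeffA_eq_zero (hQ0 : Q 0 = 1) (hQ1 : Q 1 = X)
    (hQrec : ∀ n : ℕ, Q (n + 2) * Q n =
      X * (Q (n + 1)) ^ 2 -
        4 * (Q (n + 1) * derivative (derivative (Q (n + 1))) -
              (derivative (Q (n + 1))) ^ 2)) (k : ℕ) (hk : ¬ 3 ∣ k) (n : ℕ) :
    coeffA Q n k = 0 := by
  induction k using Nat.strong_induction_on generalizing n with
  | _ k ih =>
  obtain _ | l := k
  · simp at hk
  -- In every remaining product one of the two indices is not divisible by `3`.
  have hdiff : ∀ n, coeffA Q (n + 2) (l + 1) =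
      2 * coeffA Q (n + 1) (l + 1) - coeffA Q n (l + 1) := by
    intro n
    have h := coeffA_rec hQ0 hQ1 hQrec n (l + 1)
    rw [sum_antidiagonal_succ_eq_ends_add, Finset.sum_eq_zero] at h
    · have hz : (if 3 ≤ l + 1 then 8 * ∑ p ∈ antidiagonal (l + 1 - 3),
          (((n : ℚ) + 1) * (n + 2) / 2 - ((p.1 : ℚ) - p.2) ^ 2 / 2 - ((p.1 : ℚ) + p.2) / 2) *
            (coeffA Q (n + 1) p.1 * coeffA Q (n + 1) p.2) else 0) = 0 := by
        split_ifs with h3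
        · rw [Finset.sum_eq_zero, mul_zero]
          intro p hp
          rw [mem_antidiagonal] at hp
          by_cases h1 : 3 ∣ p.1
          · rw [ih p.2 (by omega) (by omega)]
            ring
          · rw [ih p.1 (by omega) h1]
            ring
        · rfl
      rw [hz] at h
      simp only [coeffA_zero hQ0 hQ1 hQrec] at h
      linarith
    · intro p hp
      obtain ⟨i, j, rfl, hij⟩ := exists_of_mem_interior hp
      by_cases h1 : 3 ∣ i + 1
      · simp only [ih (j + 1) (by omega) (by omega)]
        ring
      · simp only [ih (i + 1) (by omega) h1]
        ring
  have h2 : coeffA Q n (l + 1) = 0 ∧ coeffA Q (n + 1) (l + 1) = 0 := by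
    induction n with
    | zero =>
      constructor
      · simp [coeffA]
      · rcases l with _ | l <;> simp [coeffA, hQ1]
    | succ n ihn => exact ⟨ihn.2, by rw [hdiff, ihn.1, ihn.2]; ring⟩
  exact h2.1

theorem sum_antidiagonal_three_mul {M : Type*} [AddCommMonoid M] (l : ℕ) (F : ℕ × ℕ → M)
    (hF : ∀ i j, i + j = 3 * l → ¬ 3 ∣ i → F (i, j) = 0) :
    ∑ p ∈ antidiagonal (3 * l), F p =
      ∑ p ∈ antidiagonal l, F (3 * p.1, 3 * p.2) := by
  symm
  refine Finset.sum_of_injOn (fun p => (3 * p.1, 3 * p.2)) ?_ ?_ ?_ (fun _ _ => rfl)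
  · rintro ⟨a, b⟩ - ⟨c, d⟩ - h
    simp at h
    simp [h]
  · rintro ⟨a, b⟩ h
    simp at h ⊢
    omega
  · rintro ⟨i, j⟩ h h'
    rw [mem_antidiagonal] at h
    refine hF i j h fun ⟨a, ha⟩ => h' ⟨(a, l - a), ?_, ?_⟩
    · simp at h ⊢
      omega
    · simp at h ⊢
      omega

theorem coeffA_three_rec (hQ0 : Q 0 = 1) (hQ1 : Q 1 = X)
    (hQrec : ∀ n : ℕ, Q (n + 2) * Q n =
      X * (Q (n + 1)) ^ 2 -
        4 * (Q (n + 1) * derivative (derivative (Q (n + 1))) -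
              (derivative (Q (n + 1))) ^ 2)) (n l : ℕ) :
    ∑ p ∈ antidiagonal (l + 1), (coeffA Q (n + 2) (3 * p.1) * coeffA Q n (3 * p.2) +
        coeffA Q n (3 * p.1) * coeffA Q (n + 2) (3 * p.2) -
        2 * (coeffA Q (n + 1) (3 * p.1) * coeffA Q (n + 1) (3 * p.2))) =
      8 * ∑ p ∈ antidiagonal l,
        (((n : ℚ) + 1) * (n + 2) / 2 + -(9 * ((p.1 : ℚ) - p.2) ^ 2 / 2 +
          3 * ((p.1 : ℚ) + p.2) / 2)) *
          (coeffA Q (n + 1) (3 * p.1) * coeffA Q (n + 1) (3 * p.2)) := by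
  have h := coeffA_rec hQ0 hQ1 hQrec n (3 * (l + 1))
  have hz := coeffA_eq_zero hQ0 hQ1 hQrec
  rw [if_pos (by omega), show 3 * (l + 1) - 3 = 3 * l by omega,
    sum_antidiagonal_three_mul _ _ (fun i j _ hi => by simp [hz i hi]),
    sum_antidiagonal_three_mul _ _ (fun i j _ hi => by simp [hz i hi])] at h
  rw [h]
  congr 1
  refine Finset.sum_congr rfl fun p _ => ?_
  push_cast
  ring

end Vanishing

/-! ### The leading coefficients and the induction -/

/-- The coefficient of `n ^ (4 * l)` in `A_{n,3l}`; its generating function is `exp (y / 6)`. -/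
def leadC (l : ℕ) : ℚ := 1 / (6 ^ l * l.factorial)

theorem leadC_succ (l : ℕ) : ((l : ℚ) + 1) * leadC (l + 1) = leadC l / 6 := by
  have : (l.factorial : ℚ) ≠ 0 := by positivity
  have : (l : ℚ) + 1 ≠ 0 := by positivity
  simp only [leadC, Nat.factorial_succ, pow_succ]
  push_cast
  field_simp

theorem sum_fst_mul_leadC (l : ℕ) (g : ℕ × ℕ → ℚ) :
    ∑ p ∈ antidiagonal (l + 1), (p.1 : ℚ) * leadC p.1 * g p =
      ∑ p ∈ antidiagonal l, leadC p.1 / 6 * g (p.1 + 1, p.2) := by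
  rw [Finset.Nat.sum_antidiagonal_succ]
  simp [leadC_succ]

/-- The coefficientwise form of the differential equation
`16 (C θ²C - (θC)²) - 4 C θC = 2 y C²`, with `θ = y d/dy`, satisfied by `C = exp (y / 6)`
(doubled by symmetrization). -/
theorem leadC_identity (l : ℕ) :
    ∑ p ∈ antidiagonal (l + 1), leadC p.1 * leadC p.2 *
      ((4 * (p.1 : ℚ) - 4 * p.2) ^ 2 - (4 * p.1 + 4 * p.2)) =
    4 * ∑ p ∈ antidiagonal l, leadC p.1 * leadC p.2 := by
  -- The summand is the symmetrization of `i c_i c_j (16 (i - j) - 4)` in `(i, j)`.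
  have h1 := sum_fst_mul_leadC l (fun p => leadC p.2 * (16 * ((p.1 : ℚ) - p.2) - 4))
  have h2 := Finset.Nat.sum_antidiagonal_swap (n := l + 1)
    (f := fun p => (p.1 : ℚ) * leadC p.1 * (leadC p.2 * (16 * ((p.1 : ℚ) - p.2) - 4)))
  have h3 := Finset.Nat.sum_antidiagonal_swap (n := l)
    (f := fun p => leadC p.1 / 6 * (leadC p.2 * (16 * (((p.1 + 1 : ℕ) : ℚ) - p.2) - 4)))
  calc _ = ∑ p ∈ antidiagonal (l + 1),
          ((p.1 : ℚ) * leadC p.1 * (leadC p.2 * (16 * ((p.1 : ℚ) - p.2) - 4))) +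
        ∑ p ∈ antidiagonal (l + 1),
          ((p.swap.1 : ℚ) * leadC p.swap.1 *
            (leadC p.swap.2 * (16 * ((p.swap.1 : ℚ) - p.swap.2) - 4))) := by
        rw [← Finset.sum_add_distrib]
        refine Finset.sum_congr rfl fun p _ => ?_
        simp only [Prod.fst_swap, Prod.snd_swap]
        ring
    _ = ∑ p ∈ antidiagonal l,
          (leadC p.1 / 6 * (leadC p.2 * (16 * (((p.1 + 1 : ℕ) : ℚ) - p.2) - 4))) +
        ∑ p ∈ antidiagonal l,
          (leadC p.swap.1 / 6 *
            (leadC p.swap.2 * (16 * (((p.swap.1 + 1 : ℕ) : ℚ) - p.swap.2) - 4))) := by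
        rw [h2, h3, h1]
    _ = _ := by
        rw [← Finset.sum_add_distrib, Finset.mul_sum]
        refine Finset.sum_congr rfl fun p _ => ?_
        simp only [Prod.fst_swap, Prod.snd_swap]
        push_cast
        ring

/-- The induction on `l`, for any array satisfying the recurrence of the `A_{n,3l}`. -/
theorem isPolyOf_of_rec (a : ℕ → ℕ → ℚ) (h0 : ∀ n, a n 0 = 1)
    (hrec : ∀ n l : ℕ, ∑ p ∈ antidiagonal (l + 1), (a (n + 2) p.1 * a n p.2 +
        a n p.1 * a (n + 2) p.2 - 2 * (a (n + 1) p.1 * a (n + 1) p.2)) =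
      8 * ∑ p ∈ antidiagonal l,
        (((n : ℚ) + 1) * (n + 2) / 2 + -(9 * ((p.1 : ℚ) - p.2) ^ 2 / 2 +
          3 * ((p.1 : ℚ) + p.2) / 2)) * (a (n + 1) p.1 * a (n + 1) p.2)) (l : ℕ) :
    IsPolyOf (fun n => a n l) (4 * l) (leadC l) := by
  induction l using Nat.strong_induction_on with
  | _ l ih =>
  obtain _ | l := l
  · exact (IsPolyOf.const 1).congr h0 rfl (by simp [leadC])
  have hd : IsPolyOf (fun n => ((n : ℚ) + 1) * (n + 2) / 2) 2 (1 / 2) :=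
    ((((IsPolyOf.pow_id 2).smul (1 / 2)).add
      (((IsPolyOf.pow_id 1).smul (3 / 2)).mono (k := 2) (by omega))).add
      ((IsPolyOf.const 1).mono (k := 2) (by omega))).congr (fun n => by ring) rfl (by ring)
  have hR := (IsPolyOf.sum (antidiagonal l) (m := 4 * l + 2)
    (f := fun p n => (((n : ℚ) + 1) * (n + 2) / 2 + -(9 * ((p.1 : ℚ) - p.2) ^ 2 / 2 +
          3 * ((p.1 : ℚ) + p.2) / 2)) * (a (n + 1) p.1 * a (n + 1) p.2))
    (c := fun p => 1 / 2 * (leadC p.1 * leadC p.2)) (by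
      intro p hp
      rw [mem_antidiagonal] at hp
      refine ((hd.add ((IsPolyOf.const (-(9 * ((p.1 : ℚ) - p.2) ^ 2 / 2 +
          3 * ((p.1 : ℚ) + p.2) / 2))).mono (k := 2) (by omega))).mul
        ((ih p.1 (by omega)).shift.mul (ih p.2 (by omega)).shift)).congr (fun _ => rfl) ?_ ?_
      · omega
      · ring)).smul 8
  have hI := IsPolyOf.sum (((antidiagonal (l + 1)).erase (0, l + 1)).erase (l + 1, 0))
    (m := 4 * l + 2)
    (f := fun p n => a (n + 2) p.1 * a n p.2 + a n p.1 * a (n + 2) p.2 -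
      2 * (a (n + 1) p.1 * a (n + 1) p.2))
    (c := fun p => leadC p.1 * leadC p.2 *
      ((4 * (p.1 : ℚ) - 4 * p.2) ^ 2 - (4 * p.1 + 4 * p.2))) (by
      intro p hp
      obtain ⟨i, j, rfl, hij⟩ := exists_of_mem_interior hp
      refine (IsPolyOf.bilin (p := 4 * i + 2) (q := 4 * j + 2)
        (ih (i + 1) (by omega)) (ih (j + 1) (by omega))).congr (fun _ => rfl) ?_ ?_
      · omega
      · push_cast
        ring)
  have hid := leadC_identity l
  rw [sum_antidiagonal_succ_eq_ends_add] at hid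
  rw [← Finset.mul_sum] at hR
  set I := ∑ p ∈ ((antidiagonal (l + 1)).erase (0, l + 1)).erase (l + 1, 0),
    leadC p.1 * leadC p.2 * ((4 * (p.1 : ℚ) - 4 * p.2) ^ 2 - (4 * p.1 + 4 * p.2))
  set S := ∑ p ∈ antidiagonal l, leadC p.1 * leadC p.2
  have hl0 : leadC 0 = 1 := by simp [leadC]
  have h2 : IsPolyOf (fun n => a (n + 2) (l + 1) - 2 * a (n + 1) (l + 1) + a n (l + 1))
      (4 * l + 2) (leadC (l + 1) * ((4 * l + 3) * (4 * l + 4))) := by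
    refine ((hR.add (hI.smul (-1))).smul (1 / 2)).congr (fun n => ?_) rfl ?_
    · have h := hrec n l
      rw [sum_antidiagonal_succ_eq_ends_add] at h
      simp only [h0] at h
      linarith
    · simp only [hl0] at hid
      push_cast at hid
      linarith
  refine h2.of_diff_two.congr (fun _ => rfl) (by ring) ?_
  push_cast
  have : (4 * (l : ℚ) + 2 + 1) ≠ 0 := by positivity
  have : (4 * (l : ℚ) + 2 + 2) ≠ 0 := by positivity
  field_simp
  ring

theorem coeffA_is_polynomial_in_n
    (Q : ℕ → Polynomial ℚ)
    (hQ0 : Q 0 = 1) (hQ1 : Q 1 = X)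
    (hQrec : ∀ n : ℕ, Q (n + 2) * Q n =
      X * (Q (n + 1)) ^ 2 -
        4 * (Q (n + 1) * derivative (derivative (Q (n + 1))) -
              (derivative (Q (n + 1))) ^ 2)) :
    ∀ l : ℕ, 1 ≤ l → ∃ R : Polynomial ℚ,
      R.degree = ((4 * l : ℕ) : WithBot ℕ) ∧
      ∀ n : ℕ, coeffA Q n (3 * l) = R.eval (n : ℚ) := by
  intro l _
  obtain ⟨R, h1, h2, h3⟩ := isPolyOf_of_rec (fun n l => coeffA Q n (3 * l))
    (coeffA_zero hQ0 hQ1 hQrec) (coeffA_three_rec hQ0 hQ1 hQrec) l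
  refine ⟨R, degree_eq_of_le_of_coeff_ne_zero (degree_le_of_natDegree_le h1) ?_, h3⟩
  rw [h2, leadC]
  positivity
end

section
/- For every integer n ≥ 1, the twelfth power sum of the roots of the Yablonskii–Vorob'ev polynomial Q_n equals s_{n,12} = 8 n (n² − 1)(n + 2)(11n⁶ + 33n⁵ − 259n⁴ − 573n³ + 2348n² + 2640n − 7700). -/
open Polynomial

/-! ### Power sum series and reciprocal polynomials -/

/-- The Euler-type operator `f ↦ d f - t f'`: reflection at degree `d` turns `z · d/dz` into it. -/
noncomputable def eulerOp (d : ℕ) (f : PowerSeries ℂ) : PowerSeries ℂ :=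
  (d : PowerSeries ℂ) * f - PowerSeries.X * PowerSeries.derivative ℂ f

/-- The generating series `∑ₘ sₘ tᵐ` of the power sums of a multiset of complex numbers. -/
noncomputable def powerSumSeries (S : Multiset ℂ) : PowerSeries ℂ :=
  PowerSeries.mk fun m => (S.map (· ^ m)).sum

lemma natDegree_X_mul_derivative_le_s14 {d : ℕ} (p : ℂ[X]) (hp : p.natDegree ≤ d) :
    (X * derivative p).natDegree ≤ d := by
  rw [natDegree_le_iff_coeff_eq_zero]
  intro k hk
  cases k with
  | zero => simp
  | succ k => rw [coeff_X_mul, coeff_derivative, coeff_eq_zero_of_natDegree_lt (by omega), zero_mul]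

/-- The operator `z · d/dz` becomes `eulerOp d` under reflection at degree `d`. -/
lemma reflect_X_mul_derivative (d : ℕ) (p : ℂ[X]) (hp : p.natDegree ≤ d) :
    ((reflect d (X * derivative p) : ℂ[X]) : PowerSeries ℂ) =
      eulerOp d ((reflect d p : ℂ[X]) : PowerSeries ℂ) := by
  have h1 : reflect d (X * derivative p) =
      (d : ℂ[X]) * reflect d p - X * derivative (reflect d p) := by
    ext i
    have hc : ∀ k, (X * derivative p).coeff k = k * p.coeff k := by
      intro k
      cases k with
      | zero => simp
      | succ k => rw [coeff_X_mul, coeff_derivative]; push_cast; ring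
    have hc' : (X * derivative (reflect d p)).coeff i = i * (reflect d p).coeff i := by
      cases i with
      | zero => simp
      | succ k => rw [coeff_X_mul, coeff_derivative]; push_cast; ring
    rw [coeff_sub, hc', coeff_natCast_mul, coeff_reflect, coeff_reflect, hc]
    rcases le_or_gt i d with h | h
    · rw [revAt_le h, Nat.cast_sub h]; ring
    · rw [revAt_eq_self_of_lt h, coeff_eq_zero_of_natDegree_lt (by omega)]; ring
  have h2 : ((d : ℂ[X]) : PowerSeries ℂ) = d := map_natCast coeToPowerSeries.ringHom d
  rw [h1, eulerOp, PowerSeries.derivative_coe]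
  push_cast
  rw [h2]

lemma reflect_prod_X_sub_C (S : Multiset ℂ) :
    reflect S.card (S.map fun a => X - C a).prod = (S.map fun a => 1 - C a * X).prod := by
  induction S using Multiset.induction_on with
  | empty => simp
  | cons a S ih =>
    rw [Multiset.map_cons, Multiset.prod_cons, Multiset.card_cons, add_comm S.card 1,
      reflect_mul (F := 1) (G := S.card) _ _ (by simp) (by simp), ih, Multiset.map_cons,
      Multiset.prod_cons]
    congr 1
    rw [reflect_sub, reflect_one_X, reflect_C, pow_one]

/-- Since `∑ₘ aᵐ tᵐ = 1 / (1 - a t)`, the logarithmic derivative of `∏ (1 - a t)` generates the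
power sums. -/
lemma eulerOp_prod (S : Multiset ℂ) :
    eulerOp S.card ((S.map fun a => 1 - PowerSeries.C a * PowerSeries.X).prod) =
      (S.map fun a => 1 - PowerSeries.C a * PowerSeries.X).prod * powerSumSeries S := by
  induction S using Multiset.induction_on with
  | empty =>
    have : powerSumSeries 0 = 0 := by ext; simp [powerSumSeries]
    simp [eulerOp, this]
  | cons a S ih =>
    have hgeom : (1 - PowerSeries.C a * PowerSeries.X) *
        PowerSeries.mk (fun m => a ^ m) = 1 := by
      ext m
      cases m with
      | zero => simp [sub_mul, mul_assoc]
      | succ m =>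
        simp [sub_mul, mul_assoc, PowerSeries.coeff_succ_X_mul, PowerSeries.coeff_one, pow_succ']
    have hG : powerSumSeries (a ::ₘ S) = PowerSeries.mk (fun m => a ^ m) + powerSumSeries S := by
      ext; simp [powerSumSeries]
    rw [Multiset.map_cons, Multiset.prod_cons, Multiset.card_cons, hG]
    set f := (S.map fun a => 1 - PowerSeries.C a * PowerSeries.X).prod
    unfold eulerOp at ih ⊢
    rw [Derivation.leibniz]
    have hd : PowerSeries.derivative ℂ (1 - PowerSeries.C a * PowerSeries.X) =
        - PowerSeries.C a := by
      rw [map_sub, Derivation.leibniz, PowerSeries.derivative_X, PowerSeries.derivative_C,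
        PowerSeries.derivative_one]
      simp
    rw [hd]
    simp only [smul_eq_mul]
    push_cast
    linear_combination (1 - PowerSeries.C a * PowerSeries.X) * ih - f * hgeom

/-- The reciprocal polynomial `t ^ d p(1/t)` of a monic polynomial `p` of degree `d`,
as a power series in `t`. -/
noncomputable def recip (p : ℂ[X]) : PowerSeries ℂ := (reflect p.natDegree p : ℂ[X])

/-- The counterpart of `z p' = p · ∑ₘ sₘ z^{-m}`. -/
lemma eulerOp_recip (p : ℂ[X]) (hp : p.Monic) :
    eulerOp p.natDegree (recip p) = recip p * powerSumSeries p.roots := by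
  have hs : p.Splits := IsAlgClosed.splits p
  have hprod : p = (p.roots.map fun a => X - C a).prod :=
    hs.eq_prod_roots_of_monic hp
  have hcard : p.natDegree = p.roots.card := hs.natDegree_eq_card_roots
  have hr : recip p = (p.roots.map fun a => 1 - PowerSeries.C a * PowerSeries.X).prod := by
    have h2 := reflect_prod_X_sub_C p.roots
    rw [← hprod, ← hcard] at h2
    rw [recip, h2, ← Polynomial.coeToPowerSeries.ringHom_apply, map_multiset_prod,
      Multiset.map_map]
    congr 1
    refine Multiset.map_congr rfl fun a _ => ?_
    simp [Polynomial.coeToPowerSeries.ringHom_apply]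
  rw [hr, hcard]
  exact eulerOp_prod p.roots

lemma recip_ne_zero (p : ℂ[X]) (hp : p.Monic) : recip p ≠ 0 := by
  rw [recip, Ne, Polynomial.coe_eq_zero_iff, reflect_eq_zero_iff]
  exact hp.ne_zero

/-! ### The relation between consecutive power sum series -/

/-- One step of the recurrence, in terms of the power sum series `G` of the three polynomials:
with `θ = t d/dt` and `H = 1 + 4 t³ (θ G + G)`, taking logarithmic derivatives in
`recip A * recip B = (recip P)² H` gives the relation. -/
lemma powerSumSeries_relation (A B P : ℂ[X]) (hA : A.Monic) (hB : B.Monic) (hP : P.Monic)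
    (hdeg : A.natDegree + B.natDegree = 2 * P.natDegree + 1)
    (hrec : A * B = X * P ^ 2 - 4 * (P * derivative (derivative P) - derivative P ^ 2))
    (K H : PowerSeries ℂ)
    (hK : K = PowerSeries.X * PowerSeries.derivative ℂ (powerSumSeries P.roots) +
      powerSumSeries P.roots)
    (hH : H = 1 + 4 * PowerSeries.X ^ 3 * K) :
    H * (1 + 2 * powerSumSeries P.roots - powerSumSeries A.roots - powerSumSeries B.roots) =
      PowerSeries.X * PowerSeries.derivative ℂ H := by
  have eA := eulerOp_recip A hA
  have eB := eulerOp_recip B hB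
  have eP := eulerOp_recip P hP
  set d := P.natDegree with hd
  set GP := powerSumSeries P.roots
  set GA := powerSumSeries A.roots
  set GB := powerSumSeries B.roots
  set T : PowerSeries ℂ := PowerSeries.X
  set P1 := X * derivative P with hP1
  set P2 := X * derivative P1 with hP2
  have nP1 : P1.natDegree ≤ d := natDegree_X_mul_derivative_le_s14 P le_rfl
  have nP2 : P2.natDegree ≤ d := natDegree_X_mul_derivative_le_s14 P1 nP1
  -- multiply the recurrence by `z ^ 2`, so that it involves only `z · d/dz`
  have hrec2 : X ^ 2 * (A * B) =
      X ^ 3 * (P * P) - C 4 * (1 * (P * P2 - P * P1 - P1 * P1)) := by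
    have : derivative P1 = derivative P + X * derivative (derivative P) := by
      rw [hP1, derivative_mul]; simp
    rw [hP2, this, hrec, hP1]
    simp only [map_ofNat]
    ring
  have href := congrArg (fun p => ((reflect (3 + (d + d)) p : ℂ[X]) : PowerSeries ℂ)) hrec2
  have e1 : reflect (3 + (d + d)) (X ^ 2 * (A * B)) =
      reflect A.natDegree A * reflect B.natDegree B := by
    rw [show 3 + (d + d) = 2 + (A.natDegree + B.natDegree) by omega,
      reflect_mul _ _ (by simp) natDegree_mul_le, reflect_mul _ _ le_rfl le_rfl,
      reflect_monomial, revAt_le le_rfl]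
    simp
  have e2 : reflect (3 + (d + d)) (X ^ 3 * (P * P)) = reflect d P * reflect d P := by
    rw [reflect_mul (F := 3) (G := d + d) _ _ (by simp) natDegree_mul_le,
      reflect_mul _ _ le_rfl le_rfl, reflect_monomial, revAt_le le_rfl]
    simp [hd]
  have e3 : reflect (3 + (d + d)) (1 * (P * P2 - P * P1 - P1 * P1)) =
      X ^ 3 * (reflect d P * reflect d P2 - reflect d P * reflect d P1 -
        reflect d P1 * reflect d P1) := by
    have n1 : (P * P2).natDegree ≤ d + d := natDegree_mul_le_of_le le_rfl nP2
    have n2 : (P * P1).natDegree ≤ d + d := natDegree_mul_le_of_le le_rfl nP1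
    have n3 : (P1 * P1).natDegree ≤ d + d := natDegree_mul_le_of_le nP1 nP1
    rw [reflect_mul (F := 3) (G := d + d) _ _ (by simp)
      (natDegree_sub_le_of_le (natDegree_sub_le_of_le n1 n2) n3 |>.trans (by simp)),
      reflect_one, reflect_sub, reflect_sub, reflect_mul _ _ le_rfl nP2,
      reflect_mul _ _ le_rfl nP1, reflect_mul _ _ nP1 nP1]
  have r1 : ((reflect d P1 : ℂ[X]) : PowerSeries ℂ) = recip P * GP := by
    rw [hP1, reflect_X_mul_derivative d P le_rfl]; exact eP
  have r2 : ((reflect d P2 : ℂ[X]) : PowerSeries ℂ) =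
      recip P * GP ^ 2 - recip P * (T * PowerSeries.derivative ℂ GP) := by
    rw [hP2, reflect_X_mul_derivative d P1 nP1, r1, eulerOp, Derivation.leibniz]
    simp only [smul_eq_mul]
    unfold eulerOp at eP
    linear_combination GP * eP
  simp only [reflect_sub, reflect_C_mul, e1, e2, e3] at href
  push_cast at href
  rw [r1, r2] at href
  change recip A * recip B = recip P * recip P - PowerSeries.C 4 * (T ^ 3 *
    (recip P * (recip P * GP ^ 2 - recip P * (T * PowerSeries.derivative ℂ GP))
      - recip P * (recip P * GP) - recip P * GP * (recip P * GP))) at href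
  have hfac : recip A * recip B = recip P ^ 2 * H := by
    rw [href, hH, hK, map_ofNat]; ring
  have hder := congrArg (fun f => T * PowerSeries.derivative ℂ f) hfac
  simp only [pow_two, Derivation.leibniz, smul_eq_mul] at hder
  unfold eulerOp at eA eB eP
  have hdeg' : (A.natDegree : PowerSeries ℂ) + B.natDegree = 2 * d + 1 := by
    exact_mod_cast congrArg (Nat.cast : ℕ → PowerSeries ℂ) hdeg
  have hne : recip P ^ 2 ≠ 0 := pow_ne_zero _ (recip_ne_zero P hP)
  apply mul_left_cancel₀ hne
  linear_combination hder + recip B * eA + recip A * eB - 2 * recip P * H * eP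
    - (recip A * recip B) * hdeg' - (1 + 2 * d - GA - GB) * hfac

/-- The relation between power sum series, read off coefficient by coefficient. -/
lemma coeff_relation (G D K H : PowerSeries ℂ)
    (hK : K = PowerSeries.X * PowerSeries.derivative ℂ G + G)
    (hH : H = 1 + 4 * PowerSeries.X ^ 3 * K)
    (hrel : H * D = PowerSeries.X * PowerSeries.derivative ℂ H) :
    (∀ m < 3, D.coeff m = 0) ∧
    ∀ m, D.coeff (m + 3) =
      4 * (m + 3) * (m + 1) * G.coeff m -
        4 * ∑ ij ∈ Finset.HasAntidiagonal.antidiagonal m,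
          (ij.1 + 1) * G.coeff ij.1 * D.coeff ij.2 := by
  have htheta : ∀ (f : PowerSeries ℂ) m,
      (PowerSeries.X * PowerSeries.derivative ℂ f).coeff m = m * f.coeff m := by
    intro f m
    cases m with
    | zero => simp
    | succ m => rw [PowerSeries.coeff_succ_X_mul, PowerSeries.coeff_derivative]; push_cast; ring
  have hKc : ∀ m, K.coeff m = (m + 1) * G.coeff m := by
    intro m
    rw [hK, map_add, htheta]; ring
  have hH' : H = 1 + PowerSeries.X ^ 3 * (PowerSeries.C 4 * K) := by
    rw [hH, map_ofNat]; ring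
  have hmul : H * D = D + PowerSeries.X ^ 3 * (PowerSeries.C 4 * (K * D)) := by
    rw [hH']; ring
  have key : ∀ m, (H * D).coeff m = m * H.coeff m := fun m => by rw [hrel, htheta]
  rw [hmul, hH'] at key
  refine ⟨fun m hm => ?_, fun m => ?_⟩
  · have := key m
    rw [map_add, map_add, PowerSeries.coeff_X_pow_mul', PowerSeries.coeff_X_pow_mul',
      if_neg (by omega), if_neg (by omega), PowerSeries.coeff_one] at this
    rcases Nat.eq_zero_or_pos m with h | h
    · simpa [h] using this
    · simpa [h.ne'] using this
  · have := key (m + 3)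
    rw [map_add, map_add, PowerSeries.coeff_X_pow_mul, PowerSeries.coeff_X_pow_mul,
      PowerSeries.coeff_one, if_neg (by omega), PowerSeries.coeff_C_mul, PowerSeries.coeff_C_mul,
      PowerSeries.coeff_mul, hKc] at this
    simp only [hKc] at this
    push_cast at this
    linear_combination this

/-! ### The recursion for the power sums -/

/-- A sequence is determined by its first two values and its second differences. -/
lemma eq_of_second_difference (g F : ℕ → ℂ) (h0 : g 0 = F 0) (h1 : g 1 = F 1)
    (h : ∀ n, g (n + 2) - 2 * g (n + 1) + g n = F (n + 2) - 2 * F (n + 1) + F n) (n : ℕ) :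
    g n = F n := by
  induction n using Nat.twoStepInduction with
  | zero => exact h0
  | one => exact h1
  | more n ih0 ih1 => linear_combination h n + 2 * ih1 - ih0

/-- The recurrence forces monicity and the degree relation `dₙ₊₂ + dₙ = 2 dₙ₊₁ + 1`. -/
lemma monic_and_natDegree_of_rec (A B P : ℂ[X]) (hB : B.Monic) (hP : P.Monic)
    (hrec : A * B = X * P ^ 2 - 4 * (P * derivative (derivative P) - derivative P ^ 2)) :
    A.Monic ∧ A.natDegree + B.natDegree = 2 * P.natDegree + 1 := by
  have hM : (X * P ^ 2).Monic := monic_X.mul (hP.pow 2)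
  have hMd : (X * P ^ 2).natDegree = 2 * P.natDegree + 1 := by
    rw [monic_X.natDegree_mul (hP.pow 2), hP.natDegree_pow, natDegree_X]; ring
  have hd1 : (derivative P).natDegree ≤ P.natDegree :=
    (natDegree_derivative_le P).trans (Nat.sub_le _ _)
  have hd2 : (derivative (derivative P)).natDegree ≤ P.natDegree :=
    ((natDegree_derivative_le _).trans (Nat.sub_le _ _)).trans hd1
  have hR : (4 * (P * derivative (derivative P) - derivative P ^ 2)).natDegree <
      (X * P ^ 2).natDegree := by
    rw [hMd, show (4 : ℂ[X]) = C 4 from (map_ofNat C 4).symm]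
    have h1 : (P * derivative (derivative P)).natDegree ≤ P.natDegree + P.natDegree :=
      natDegree_mul_le_of_le le_rfl hd2
    have h2 : (derivative P ^ 2).natDegree ≤ P.natDegree + P.natDegree := by
      rw [pow_two]; exact natDegree_mul_le_of_le hd1 hd1
    have h3 := (natDegree_C_mul_le (4 : ℂ)
      (P * derivative (derivative P) - derivative P ^ 2)).trans
      (natDegree_sub_le_of_le h1 h2)
    simp only [max_self] at h3
    omega
  have hAB : (A * B).Monic := by
    rw [hrec]; exact hM.sub_of_left (degree_lt_degree hR)
  have hA : A.Monic := Monic.of_mul_monic_right hB hAB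
  refine ⟨hA, ?_⟩
  rw [← hA.natDegree_mul hB, hrec, natDegree_sub_eq_left_of_natDegree_lt hR, hMd]

/-- The recursion for the power sums: `D n m` is minus the second difference in `n` of `S n m`
(with a correction at `m = 0`), and it only involves the `S (n + 1) j` with `j ≤ m - 3`. -/
lemma powerSum_recursion (Q : ℕ → Polynomial ℚ) (hQ0 : Q 0 = 1) (hQ1 : Q 1 = X)
    (hQrec : ∀ n : ℕ, Q (n + 2) * Q n =
      X * (Q (n + 1)) ^ 2 -
        4 * (Q (n + 1) * derivative (derivative (Q (n + 1))) -
              (derivative (Q (n + 1))) ^ 2))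
    (D : ℕ → ℕ → ℂ)
    (hD : ∀ n m, D n m = (if m = 0 then 1 else 0) + 2 * powerSum Q (n + 1) m -
      powerSum Q (n + 2) m - powerSum Q n m) (n : ℕ) :
    (∀ m < 3, D n m = 0) ∧
    ∀ m, D n (m + 3) =
      4 * (m + 3) * (m + 1) * powerSum Q (n + 1) m -
        4 * ∑ ij ∈ Finset.HasAntidiagonal.antidiagonal m,
          (ij.1 + 1) * powerSum Q (n + 1) ij.1 * D n ij.2 := by
  set P : ℕ → ℂ[X] := fun n => (Q n).map (algebraMap ℚ ℂ) with hPdef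
  have hrec : ∀ n, P (n + 2) * P n = X * P (n + 1) ^ 2 -
      4 * (P (n + 1) * derivative (derivative (P (n + 1))) - derivative (P (n + 1)) ^ 2) := by
    intro n
    have := congrArg (Polynomial.map (algebraMap ℚ ℂ)) (hQrec n)
    simpa [hPdef, derivative_map] using this
  have hmonic : ∀ n, (P n).Monic := by
    intro n
    induction n using Nat.twoStepInduction with
    | zero => simp [hPdef, hQ0]
    | one => simp [hPdef, hQ1]
    | more n ih0 ih1 => exact (monic_and_natDegree_of_rec _ _ _ ih0 ih1 (hrec n)).1
  have hc : ∀ n m, (powerSumSeries (P n).roots).coeff m = powerSum Q n m := by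
    intro n m
    rw [powerSumSeries, PowerSeries.coeff_mk]; rfl
  have hrel := powerSumSeries_relation _ _ _ (hmonic (n + 2)) (hmonic n) (hmonic (n + 1))
    (monic_and_natDegree_of_rec _ _ _ (hmonic n) (hmonic (n + 1)) (hrec n)).2 (hrec n)
    _ _ rfl rfl
  have hco := coeff_relation _ _ _ _ rfl rfl hrel
  have hDc : ∀ m, (1 + 2 * powerSumSeries (P (n + 1)).roots - powerSumSeries (P (n + 2)).roots -
      powerSumSeries (P n).roots).coeff m = D n m := by
    intro m
    rw [hD, ← map_ofNat PowerSeries.C 2, map_sub, map_sub, map_add, PowerSeries.coeff_C_mul,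
      PowerSeries.coeff_one, hc, hc, hc]
  simpa only [hDc, hc] using hco

/-! ### Explicit formulas up to the twelfth power sum -/

/-- Explicit formula for the power sum `s_{n,12}` of the roots of the
Yablonskii–Vorob'ev polynomial `Q n`. -/
theorem powerSum_twelve
    (Q : ℕ → Polynomial ℚ)
    (hQ0 : Q 0 = 1) (hQ1 : Q 1 = X)
    (hQrec : ∀ n : ℕ, Q (n + 2) * Q n =
      X * (Q (n + 1)) ^ 2 -
        4 * (Q (n + 1) * derivative (derivative (Q (n + 1))) -
              (derivative (Q (n + 1))) ^ 2)) :
    ∀ n : ℕ, 1 ≤ n →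
      powerSum Q n 12 =
        8 * (n : ℂ) * ((n : ℂ) ^ 2 - 1) * ((n : ℂ) + 2) * (11 * (n : ℂ) ^ 6 + 33 * (n : ℂ) ^ 5 - 259 * (n : ℂ) ^ 4 - 573 * (n : ℂ) ^ 3 + 2348 * (n : ℂ) ^ 2 + 2640 * (n : ℂ) - 7700) := by
  obtain ⟨D, hD⟩ : ∃ D : ℕ → ℕ → ℂ, ∀ n m, D n m = (if m = 0 then 1 else 0) +
      2 * powerSum Q (n + 1) m - powerSum Q (n + 2) m - powerSum Q n m := ⟨_, fun _ _ => rfl⟩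
  have hrecur := powerSum_recursion Q hQ0 hQ1 hQrec D hD
  have init0 : ∀ m, powerSum Q 0 m = 0 := by
    intro m; simp [powerSum, hQ0]
  have init1 : ∀ m, powerSum Q 1 m = if m = 0 then 1 else 0 := by
    intro m; simp [powerSum, hQ1, zero_pow_eq]
  -- a candidate formula for `powerSum Q · m` only has to be checked on second differences
  have step : ∀ (m : ℕ) (F : ℕ → ℂ), F 0 = 0 → F 1 = (if m = 0 then 1 else 0) →
      (∀ n, D n m = (if m = 0 then 1 else 0) + 2 * F (n + 1) - F (n + 2) - F n) →
      ∀ n, powerSum Q n m = F n := by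
    intro m F h0 h1 h
    refine eq_of_second_difference _ _ (by rw [init0, h0]) (by rw [init1, h1]) fun n => ?_
    linear_combination hD n m - h n
  have low : ∀ n m, m < 3 → D n m = 0 := fun n => (hrecur n).1
  have rec3 := fun n => (hrecur n).2
  simp only [Finset.Nat.sum_antidiagonal_eq_sum_range_succ_mk] at rec3
  clear hrecur hQrec hD
  -- Below, `D m` is computed from the earlier formulas, and `S m` from `D m` by `step`; both
  -- vanish when `3 ∤ m`.
  have D0 := fun n => low n 0 (by norm_num)
  have D1 := fun n => low n 1 (by norm_num)
  have D2 := fun n => low n 2 (by norm_num)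
  have S0 := step 0 (fun n => n * (n + 1) / 2) (by norm_num) (by norm_num)
    (fun n => by rw [D0]; push_cast; ring)
  have S1 := step 1 (fun _ => 0) rfl (by norm_num) (fun n => by rw [D1]; norm_num)
  have S2 := step 2 (fun _ => 0) rfl (by norm_num) (fun n => by rw [D2]; norm_num)
  have D3 := fun n => rec3 n 0
  simp [D0, S0] at D3
  have S3 := step 3 (fun n => -(n * (n ^ 2 - 1) * (n + 2)) / 2)
    (by norm_num) (by norm_num)
    (fun n => by rw [D3]; push_cast; ring)
  have D4 := fun n => rec3 n 1
  simp [Finset.sum_range_succ, D0, D1, S0, S1] at D4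
  have S4 := step 4 (fun _ => 0) rfl (by norm_num) (fun n => by rw [D4]; norm_num)
  have D5 := fun n => rec3 n 2
  simp [Finset.sum_range_succ, D0, D1, D2, S0, S1, S2] at D5
  have S5 := step 5 (fun _ => 0) rfl (by norm_num) (fun n => by rw [D5]; norm_num)
  have D6 := fun n => rec3 n 3
  simp [Finset.sum_range_succ, D0, D1, D2, D3, S0, S1, S2, S3] at D6
  have S6 := step 6 (fun n => n * (n ^ 2 - 1) * (n + 2) * (2 * n ^ 2 + 2 * n - 10))
    (by norm_num) (by norm_num)
    (fun n => by rw [D6]; push_cast; ring)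
  have D7 := fun n => rec3 n 4
  simp [Finset.sum_range_succ, D0, D1, D2, D3, D4, S0, S1, S2, S3, S4] at D7
  have S7 := step 7 (fun _ => 0) rfl (by norm_num) (fun n => by rw [D7]; norm_num)
  have D8 := fun n => rec3 n 5
  simp [Finset.sum_range_succ, D0, D1, D2, D3, D4, D5, S0, S1, S2, S3, S4, S5] at D8
  have S8 := step 8 (fun _ => 0) rfl (by norm_num) (fun n => by rw [D8]; norm_num)
  have D9 := fun n => rec3 n 6
  simp [Finset.sum_range_succ, D0, D1, D2, D3, D4, D5, D6, S0, S1, S2, S3, S4, S5, S6] at D9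
  have S9 := step 9 (fun n => n * (n ^ 2 - 1) * (n + 2) *
    (-12 * n ^ 4 - 24 * n ^ 3 + 152 * n ^ 2 + 164 * n - 560))
    (by norm_num) (by norm_num)
    (fun n => by rw [D9]; push_cast; ring)
  have D10 := fun n => rec3 n 7
  simp [Finset.sum_range_succ, D0, D1, D2, D3, D4, D5, D6, D7,
    S0, S1, S2, S3, S4, S5, S6, S7] at D10
  have S10 := step 10 (fun _ => 0) rfl (by norm_num) (fun n => by rw [D10]; norm_num)
  have D11 := fun n => rec3 n 8
  simp [Finset.sum_range_succ, D0, D1, D2, D3, D4, D5, D6, D7, D8,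
    S0, S1, S2, S3, S4, S5, S6, S7, S8] at D11
  have S11 := step 11 (fun _ => 0) rfl (by norm_num) (fun n => by rw [D11]; norm_num)
  have D12 := fun n => rec3 n 9
  simp [Finset.sum_range_succ, D0, D1, D2, D3, D4, D5, D6, D7, D8, D9,
    S0, S1, S2, S3, S4, S5, S6, S7, S8, S9] at D12
  have S12 := step 12 (fun n => 8 * n * (n ^ 2 - 1) * (n + 2) *
    (11 * n ^ 6 + 33 * n ^ 5 - 259 * n ^ 4 - 573 * n ^ 3 + 2348 * n ^ 2 + 2640 * n - 7700))
    (by norm_num) (by norm_num)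
    (fun n => by rw [D12]; push_cast; ring)
  exact fun n _ => S12 n
end
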